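/- arXiv:1206.6139 — 5 statements merged into one kernel-verified Lean document; each statement's English description precedes it below -/
import Mathlib

section
/- Let m be an odd squarefree positive integer and let f : (Z/mZ)* → [0,1] be a function with ∑_{x ∈ (Z/mZ)*} f(x) > (5/8)·φ(m), where φ is Euler's totient function. Then for every x ∈ Z/mZ there exist units a₁, a₂, a₃ ∈ (Z/mZ)* with x = a₁ + a₂ + a₃ such that f(a₁)f(a₂)f(a₃) > 0 and f(a₁) + f(a₂) + f(a₃) > 3/2. -/
def GG (a b c : ℝ) : ℝ := a * b + b * c + c * a

theorem claimN_ord (r s t d e f : ℝ) (hrs : s ≤ r) (hst : t ≤ s)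
    (hA : 0 ≤ s + t)
    (hT : 0 ≤ 3 - GG r s t) (hd : 0 ≤ d) (he : 0 ≤ e) (hf : 0 ≤ f)
    (hd' : d ≤ 11/5 - r) (he' : e ≤ 11/5 - s) (hf' : f ≤ 11/5 - t)
    (h2 : e * (r + t) ≤ 3 - GG r s t)
    (h3 : f * (r + s) ≤ 3 - GG r s t) :
    d * e + e * f + f * d ≤ 6 * (3 - GG r s t) := by
  have hde : d * e ≤ (11/5 - r) * (11/5 - s) := mul_le_mul hd' he' he (by linarith)
  have hef : e * f ≤ (11/5 - s) * (11/5 - t) := mul_le_mul he' hf' hf (by linarith)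
  have hfd : f * d ≤ (11/5 - t) * (11/5 - r) := mul_le_mul hf' hd' hd (by linarith)
  have hr : 0 ≤ r := by linarith
  have hs : 0 ≤ s := by linarith
  by_cases c1 : r + s < 22/25
  · have : GG r s t ≤ 3/4 * (r+s)^2 := by unfold GG; nlinarith
    unfold GG at *
    nlinarith
  by_cases c2 : 3 * r + 2 * t < 11/5
  · have : GG r s t ≤ r * r + 2 * r * t := by unfold GG; nlinarith
    have : 2 * r * t ≤ r * (11/5 - 3 * r) := by nlinarith
    have h4 : 3 - GG r s t ≥ 3 + 2 * r^2 - 11/5 * r := by nlinarith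
    have h5 : 7 * (3 - GG r s t) ≥ 438/25 - 22/5 * (r + s + t) := by nlinarith [sq_nonneg (r - 11/28)]
    unfold GG at *
    nlinarith
  push Not at c1 c2
  set T := 3 - GG r s t
  have a1 : d * e ≤ 2 * T := by nlinarith
  have a2 : f * (d + e) ≤ 4 * T := by nlinarith
  nlinarith

theorem claimN (r s t d e f : ℝ) 
    (hA : 0 ≤ s + t) (hB : 0 ≤ r + t) (hC : 0 ≤ r + s)
    (hT : 0 ≤ 3 - GG r s t) (hd : 0 ≤ d) (he : 0 ≤ e) (hf : 0 ≤ f)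
    (hd' : d ≤ 11/5 - r) (he' : e ≤ 11/5 - s) (hf' : f ≤ 11/5 - t)
    (h1 : d * (s + t) ≤ 3 - GG r s t)
    (h2 : e * (r + t) ≤ 3 - GG r s t)
    (h3 : f * (r + s) ≤ 3 - GG r s t) :
    d * e + e * f + f * d ≤ 6 * (3 - GG r s t) := by
  have e1 : GG r t s = GG r s t := by unfold GG; ring
  have e2 : GG s r t = GG r s t := by unfold GG; ring
  have e3 : GG s t r = GG r s t := by unfold GG; ring
  have e4 : GG t r s = GG r s t := by unfold GG; ring
  have e5 : GG t s r = GG r s t := by unfold GG; ring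
  rcases le_total r s with a | a <;> rcases le_total s t with b | b <;> rcases le_total r t with c | c
  · have := claimN_ord t s r f e d b a (by linarith) (by rwa [e5]) hf he hd hf' he' hd'
      (by rw [e5]; linarith) (by rw [e5]; linarith)
    rw [e5] at this; linarith
  · have := claimN_ord t s r f e d b a (by linarith) (by rwa [e5]) hf he hd hf' he' hd'
      (by rw [e5]; linarith) (by rw [e5]; linarith)
    rw [e5] at this; linarith
  · have := claimN_ord s t r e f d b c (by linarith) (by rwa [e3]) he hf hd he' hf' hd'
      (by rw [e3]; linarith) (by rw [e3]; linarith)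
    rw [e3] at this; linarith
  · have := claimN_ord s r t e d f a c (by linarith) (by rwa [e2]) he hd hf he' hd' hf'
      (by rw [e2]; linarith) (by rw [e2]; linarith)
    rw [e2] at this; linarith
  · have := claimN_ord t r s f d e c a (by linarith) (by rwa [e4]) hf hd he hf' hd' he'
      (by rw [e4]; linarith) (by rw [e4]; linarith)
    rw [e4] at this; linarith
  · have := claimN_ord r t s d f e c b (by linarith) (by rwa [e1]) hd hf he hd' hf' he'
      (by rw [e1]; linarith) (by rw [e1]; linarith)
    rw [e1] at this; linarith
  · have := claimN_ord r s t d e f a b (by linarith) hT hd he hf hd' he' hf' h2 h3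
    linarith
  · have := claimN_ord r s t d e f a b (by linarith) hT hd he hf hd' he' hf' h2 h3
    linarith

theorem GG_lower (r s t : ℝ) (hr : -1 ≤ r) (hs : -1 ≤ s) (ht : -1 ≤ t)
    (hr' : r ≤ 11/5) (hs' : s ≤ 11/5) (ht' : t ≤ 11/5) : -(87/25) ≤ GG r s t := by
  unfold GG
  rcases le_total 0 (s+t) with h | h
  · have : -(s+t) ≤ r * (s+t) := by nlinarith
    have : 0 ≤ (s+1)*(11/5-t) := mul_nonneg (by linarith) (by linarith)
    have : 0 ≤ (t+1)*(11/5-s) := mul_nonneg (by linarith) (by linarith)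
    nlinarith
  · have : 11/5*(s+t) ≤ r * (s+t) := by nlinarith
    nlinarith [mul_nonneg (by linarith : 0 ≤ s+1) (by linarith : 0 ≤ t+1)]

/-- negative case: the slack is at least 2 -/
theorem neg_slack (p q r : ℝ) (hq : -1 ≤ q) (hr : -1 ≤ r) (h : q + r ≤ 0)
    (hG : 3 < GG ((11/5+p)/2) ((11/5+q)/2) ((11/5+r)/2)) : GG p q r ≤ 1 := by
  by_contra hc
  push Not at hc
  unfold GG at *
  have hG' : -(63/25) < p*q+q*r+r*p + 22/5*(p+q+r) := by nlinarith
  obtain ⟨k, hk⟩ : ∃ k, k = -(q+r) := ⟨_, rfl⟩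
  have hk0 : 0 ≤ k := by linarith
  have hk2 : k ≤ 2 := by linarith
  have hqr : q * r ≤ k^2/4 := by nlinarith [sq_nonneg (q-r)]
  have h1 : 1 < -p*k + k^2/4 := by
    have : p*q+q*r+r*p = -p*k+q*r := by rw [hk]; ring
    linarith
  have h2 : -(63/25) < -p*k + k^2/4 + 22/5*(p-k) := by
    have : p*q+q*r+r*p = -p*k+q*r := by rw [hk]; ring
    nlinarith
  have hk1 : 0 < k := by
    rcases hk0.lt_or_eq with h | h
    · exact h
    · rw [← h] at h1; norm_num at h1
  -- p k < k^2/4 - 1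
  have h3 : k * (-(63/25)) < k * (-p*k + k^2/4 + 22/5*(p-k)) := mul_lt_mul_of_pos_left h2 hk1
  have h4 : (p*k) * (22/5 - k) ≤ (k^2/4-1) * (22/5-k) := by
    apply mul_le_mul_of_nonneg_right <;> linarith
  nlinarith

theorem GG_pair (a b c : ℝ) (ha : -1 ≤ a) (hb : -1 ≤ b) (hc : -1 ≤ c) (h : 3 < GG a b c) :
    0 < a + b := by
  by_contra hn
  push Not at hn
  unfold GG at h
  have h1 : c * (a+b) ≤ -(a+b) := by nlinarith
  have h2 : 4 < (1-a)*(1-b) := by nlinarith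
  nlinarith [mul_nonneg (by linarith : 0 ≤ a+1) (by linarith : 0 ≤ b+1)]

theorem GG_mono (a b c a' b' c' : ℝ) (ha : -1 ≤ a) (hb : -1 ≤ b) (hc : -1 ≤ c) (h : 3 < GG a b c)
    (h1 : a ≤ a') (h2 : b ≤ b') (h3 : c ≤ c') : 3 < GG a' b' c' := by
  have k1 := GG_pair a b c ha hb hc h
  have k2 := GG_pair b c a hb hc ha (by unfold GG at *; linarith)
  have k3 := GG_pair c a b hc ha hb (by unfold GG at *; linarith)
  have : GG a b c ≤ GG a' b c := by unfold GG; nlinarith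
  have : GG a' b c ≤ GG a' b' c := by unfold GG; nlinarith
  have : GG a' b' c ≤ GG a' b' c' := by unfold GG; nlinarith
  linarith

theorem halfReal (x y z ρ σ τ p q r : ℝ) (hp : -1 ≤ p) (hq : -1 ≤ q) (hr : -1 ≤ r)
    (hp' : p ≤ ρ) (hq' : q ≤ σ) (hr' : r ≤ τ) (hx : ρ ≤ x) (hy : σ ≤ y) (hz : τ ≤ z)
    (hx' : x ≤ 11/5) (hy' : y ≤ 11/5) (hz' : z ≤ 11/5)
    (g1 : GG x σ τ ≤ 3) (g2 : GG ρ y τ ≤ 3) (g3 : GG ρ σ z ≤ 3) (g0 : GG ρ σ τ ≤ 3)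
    (hG : 3 < GG ((11/5+p)/2) ((11/5+q)/2) ((11/5+r)/2)) :
    GG x y τ + GG x σ z + GG ρ y z - 9 ≤ 9 * (3 - GG p q r) := by
  by_cases hneg : q + r ≤ 0 ∨ p + r ≤ 0 ∨ p + q ≤ 0
  · have hT : GG p q r ≤ 1 := by
      rcases hneg with h | h | h
      · exact neg_slack p q r hq hr h hG
      · have := neg_slack q p r hp hr h (by unfold GG at *; linarith)
        unfold GG at *; linarith
      · have := neg_slack r p q hp hq h (by unfold GG at *; linarith)
        unfold GG at *; linarith
    have hl := GG_lower ρ σ τ (by linarith) (by linarith) (by linarith) (by linarith)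
      (by linarith) (by linarith)
    have b1 : x * y ≤ 121/25 := by nlinarith
    have b2 : y * z ≤ 121/25 := by nlinarith
    have b3 : z * x ≤ 121/25 := by nlinarith
    unfold GG at *
    nlinarith
  · push Not at hneg
    obtain ⟨n1, n2, n3⟩ := hneg
    have c := claimN ρ σ τ (x-ρ) (y-σ) (z-τ) (by linarith) (by linarith) (by linarith)
      (by linarith) (by linarith) (by linarith) (by linarith) (by linarith) (by linarith)
      (by linarith) (by unfold GG at *; linarith) (by unfold GG at *; linarith)
      (by unfold GG at *; linarith)
    have m1 : GG p q r ≤ GG ρ q r := by unfold GG; nlinarith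
    have m2 : GG ρ q r ≤ GG ρ σ r := by unfold GG; nlinarith
    have m3 : GG ρ σ r ≤ GG ρ σ τ := by unfold GG; nlinarith
    have : GG x y τ + GG x σ z + GG ρ y z - 9 ≤ 9 * (3 - GG ρ σ τ) := by
      unfold GG at *
      nlinarith
    linarith

theorem latin (m : ℕ) (hm : 0 < m) (α β γ : ℕ → ℝ)
    (h : ∀ i j k, i < m → j < m → k < m → m ≤ i + j + k → GG (α i) (β j) (γ k) ≤ 3) :
    (m:ℝ)^2 * (GG ((∑ i ∈ Finset.range m, α i)/m) ((∑ i ∈ Finset.range m, β i)/m)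
      ((∑ i ∈ Finset.range m, γ i)/m) - 3) ≤ GG (α 0) (β 0) (γ 0) - 3 := by
  haveI : NeZero m := ⟨hm.ne'⟩
  have key : ∀ f : ℕ → ℝ, ∑ i ∈ Finset.range m, f i = ∑ i : ZMod m, f i.val := by
    intro f
    obtain ⟨m, rfl⟩ : ∃ k, m = k + 1 := ⟨m - 1, by omega⟩
    exact Finset.sum_range f
  have sh : ∀ (f : ZMod m → ℝ) (i : ZMod m), ∑ j : ZMod m, f (-i - j) = ∑ j, f j := by
    intro f i
    exact Fintype.sum_equiv (Equiv.subLeft (-i)) _ _ (fun j => rfl)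
  have sh' : ∀ (f : ZMod m → ℝ) (j : ZMod m), ∑ i : ZMod m, f (-i - j) = ∑ j, f j := by
    intro f j
    rw [← sh f j]
    refine Finset.sum_congr rfl fun i _ => ?_
    congr 1; ring
  have tot : ∑ i : ZMod m, ∑ j : ZMod m, (GG (α i.val) (β j.val) (γ (-i - j).val) - 3)
      ≤ GG (α 0) (β 0) (γ 0) - 3 := by
    rw [← Fintype.sum_prod_type' (f := fun i j : ZMod m => GG (α i.val) (β j.val) (γ (-i - j).val) - 3)]
    rw [← Finset.add_sum_erase _ _ (Finset.mem_univ ((0, 0) : ZMod m × ZMod m))]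
    have : ∑ x ∈ Finset.univ.erase ((0, 0) : ZMod m × ZMod m),
        (GG (α x.1.val) (β x.2.val) (γ (-x.1 - x.2).val) - 3) ≤ 0 := by
      apply Finset.sum_nonpos
      rintro ⟨i, j⟩ hx
      have hne := Finset.ne_of_mem_erase hx
      have hd : m ∣ i.val + j.val + (-i - j).val := by
        rw [← ZMod.natCast_eq_zero_iff]
        push_cast
        simp only [ZMod.natCast_val, ZMod.cast_id', id_eq]
        ring
      have hpos : 0 < i.val + j.val + (-i - j).val := by
        by_contra h0
        apply hne
        have h1 : i.val = 0 := by omega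
        have h2 : j.val = 0 := by omega
        rw [ZMod.val_eq_zero] at h1 h2
        rw [h1, h2]
      have := h _ _ _ i.val_lt j.val_lt (-i - j).val_lt (Nat.le_of_dvd hpos hd)
      simpa using this
    simp only [ZMod.val_zero, neg_zero, sub_zero]
    linarith
  have ev : ∑ i : ZMod m, ∑ j : ZMod m, (GG (α i.val) (β j.val) (γ (-i - j).val) - 3) =
      GG (∑ i ∈ Finset.range m, α i) (∑ i ∈ Finset.range m, β i) (∑ i ∈ Finset.range m, γ i)
        - 3 * (m:ℝ)^2 := by
    rw [key, key, key]
    simp only [GG, Finset.sum_sub_distrib, Finset.sum_add_distrib]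
    have e1 : ∑ i : ZMod m, ∑ j : ZMod m, α i.val * β j.val = (∑ i : ZMod m, α i.val) * ∑ i : ZMod m, β i.val := by
      rw [Finset.sum_mul_sum]
    have e2 : ∑ i : ZMod m, ∑ j : ZMod m, β j.val * γ (-i - j).val = (∑ i : ZMod m, β i.val) * ∑ i : ZMod m, γ i.val := by
      rw [Finset.sum_comm, Finset.sum_mul]
      refine Finset.sum_congr rfl fun j _ => ?_
      rw [← Finset.mul_sum, sh' (fun t => γ t.val)]
    have e3 : ∑ i : ZMod m, ∑ j : ZMod m, γ (-i - j).val * α i.val = (∑ i : ZMod m, γ i.val) * ∑ i : ZMod m, α i.val := by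
      rw [Finset.mul_sum]
      refine Finset.sum_congr rfl fun j _ => ?_
      rw [← Finset.sum_mul, sh (fun t => γ t.val)]
    rw [e1, e2, e3]
    simp [ZMod.card]
    ring
  rw [ev] at tot
  have hm' : (m:ℝ) ≠ 0 := by positivity
  refine le_trans (le_of_eq ?_) tot
  unfold GG
  field_simp

theorem indep (m : ℕ) (hm : 0 < m) (α β γ : ℕ → ℝ)
    (h : ∀ i j k, i < m → j < m → k < m → GG (α i) (β j) (γ k) ≤ 3) :
    GG ((∑ i ∈ Finset.range m, α i)/m) ((∑ i ∈ Finset.range m, β i)/m)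
      ((∑ i ∈ Finset.range m, γ i)/m) ≤ 3 := by
  have h1 := latin m hm α β γ (fun i j k a b c _ => h i j k a b c)
  have h2 := h 0 0 0 hm hm hm
  have : (0:ℝ) < (m:ℝ)^2 := by positivity
  by_contra hc
  push Not at hc
  nlinarith

theorem avg_bounds (m : ℕ) (hm : 0 < m) (α : ℕ → ℝ) (l u : ℝ)
    (h : ∀ i, i < m → l ≤ α i ∧ α i ≤ u) :
    l ≤ (∑ i ∈ Finset.range m, α i)/m ∧ (∑ i ∈ Finset.range m, α i)/m ≤ u := by
  have hm' : (0:ℝ) < m := by positivity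
  constructor
  · rw [le_div_iff₀ hm']
    have := Finset.card_nsmul_le_sum (Finset.range m) α l (fun i hi => (h i (Finset.mem_range.1 hi)).1)
    simp at this; linarith
  · rw [div_le_iff₀ hm']
    have := Finset.sum_le_card_nsmul (Finset.range m) α u (fun i hi => (h i (Finset.mem_range.1 hi)).2)
    simp at this; linarith

theorem seq_lemma (m : ℕ) (hm : 3 ≤ m) (u v w : ℕ → ℝ)
    (hu : Antitone u) (hv : Antitone v) (hw : Antitone w)
    (bu : ∀ i, -1 ≤ u i ∧ u i ≤ 11/5) (bv : ∀ i, -1 ≤ v i ∧ v i ≤ 11/5)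
    (bw : ∀ i, -1 ≤ w i ∧ w i ≤ 11/5)
    (h : ∀ i j k, i < 2*m → j < 2*m → k < 2*m → 2*m ≤ i + j + k → GG (u i) (v j) (w k) ≤ 3) :
    GG ((∑ i ∈ Finset.range (2*m), u i)/(2*m)) ((∑ i ∈ Finset.range (2*m), v i)/(2*m))
      ((∑ i ∈ Finset.range (2*m), w i)/(2*m)) ≤ 3 := by
  have hm0 : 0 < m := by omega
  have hm' : (0:ℝ) < m := by positivity
  have split : ∀ f : ℕ → ℝ, (∑ i ∈ Finset.range (2*m), f i)/(2*m) =
      ((∑ i ∈ Finset.range m, f i)/m + (∑ i ∈ Finset.range m, f (m+i))/m)/2 := by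
    intro f
    rw [two_mul, Finset.sum_range_add]
    field_simp
  by_contra hc
  push Not at hc
  rw [split, split, split] at hc
  have l1 := latin m hm0 u v (fun i => w (m+i)) (fun i j k a b c d =>
    h i j (m+k) (by omega) (by omega) (by omega) (by omega))
  have l2 := latin m hm0 u (fun i => v (m+i)) w (fun i j k a b c d =>
    h i (m+j) k (by omega) (by omega) (by omega) (by omega))
  have l3 := latin m hm0 (fun i => u (m+i)) v w (fun i j k a b c d =>
    h (m+i) j k (by omega) (by omega) (by omega) (by omega))
  have l4 := indep m hm0 (fun i => u (m+i)) (fun i => v (m+i)) (fun i => w (m+i)) (fun i j k a b c =>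
    h (m+i) (m+j) (m+k) (by omega) (by omega) (by omega) (by omega))
  have bu0 := avg_bounds m hm0 u (-1) (11/5) (fun i _ => bu i)
  have bv0 := avg_bounds m hm0 v (-1) (11/5) (fun i _ => bv i)
  have bw0 := avg_bounds m hm0 w (-1) (11/5) (fun i _ => bw i)
  have bu1 := avg_bounds m hm0 (fun i => u (m+i)) (-1) (u m) (fun i _ => ⟨(bu _).1, hu (by omega)⟩)
  have bv1 := avg_bounds m hm0 (fun i => v (m+i)) (-1) (v m) (fun i _ => ⟨(bv _).1, hv (by omega)⟩)
  have bw1 := avg_bounds m hm0 (fun i => w (m+i)) (-1) (w m) (fun i _ => ⟨(bw _).1, hw (by omega)⟩)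
  have g1 := h 0 m m (by omega) (by omega) (by omega) (by omega)
  have g2 := h m 0 m (by omega) (by omega) (by omega) (by omega)
  have g3 := h m m 0 (by omega) (by omega) (by omega) (by omega)
  have g4 := h m m m (by omega) (by omega) (by omega) (by omega)
  simp only [add_zero] at l1 l2 l3
  generalize (∑ i ∈ Finset.range m, u i)/m = U0 at *
  generalize (∑ i ∈ Finset.range m, v i)/m = V0 at *
  generalize (∑ i ∈ Finset.range m, w i)/m = W0 at *
  generalize (∑ i ∈ Finset.range m, u (m+i))/m = U1 at *
  generalize (∑ i ∈ Finset.range m, v (m+i))/m = V1 at *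
  generalize (∑ i ∈ Finset.range m, w (m+i))/m = W1 at *
  have hG := GG_mono _ _ _ ((11/5+U1)/2) ((11/5+V1)/2) ((11/5+W1)/2)
    (by linarith) (by linarith) (by linarith) hc (by linarith) (by linarith) (by linarith)
  have hr := halfReal (u 0) (v 0) (w 0) (u m) (v m) (w m) U1 V1 W1 bu1.1 bv1.1 bw1.1 bu1.2 bv1.2 bw1.2
    (hu (by omega)) (hv (by omega)) (hw (by omega)) (bu 0).2 (bv 0).2 (bw 0).2 g1 g2 g3 g4 hG
  have id4 : 4 * GG ((U0+U1)/2) ((V0+V1)/2) ((W0+W1)/2) =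
    GG U0 V0 W1 + GG U0 V1 W0 + GG U1 V0 W0 + GG U1 V1 W1 := by unfold GG; ring
  have hm9 : (9:ℝ) ≤ (m:ℝ)^2 := by
    have : (3:ℝ) ≤ m := by exact_mod_cast hm
    nlinarith
  have hh : 0 < (GG U0 V0 W1 - 3) + (GG U0 V1 W0 - 3) + (GG U1 V0 W0 - 3) - (3 - GG U1 V1 W1) := by linarith
  have := mul_pos (by linarith : (0:ℝ) < (m:ℝ)^2) hh
  nlinarith
open scoped Pointwise

theorem sorted_seq {α : Type*} [Fintype α] (f : α → ℝ) (hf : ∀ x, f x ∈ Set.Icc (0:ℝ) 1) :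
    ∃ s : ℕ → ℝ, Antitone s ∧ (∀ i, 0 ≤ s i ∧ s i ≤ 1) ∧
      ∑ i ∈ Finset.range (Fintype.card α), s i = ∑ x, f x ∧
      ∀ i < Fintype.card α, ∃ A : Finset α, A.card = i + 1 ∧ ∀ a ∈ A, s i ≤ f a := by
  classical
  set n := Fintype.card α with hn
  let e0 : Fin n ≃ α := (Fintype.equivFin α).symm
  let e : Fin n ≃ α := (Tuple.sort (fun i => - f (e0 i))).trans e0
  have he : Antitone (fun i => f (e i)) := by
    have := Tuple.monotone_sort (fun i => - f (e0 i))
    intro a b hab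
    have h2 := this hab
    simp only [Function.comp_apply, neg_le_neg_iff] at h2
    exact h2
  refine ⟨fun i => if h : i < n then f (e ⟨i, h⟩) else 0, ?_, ?_, ?_, ?_⟩
  · intro i j hij
    dsimp only
    by_cases hj : j < n
    · have hi : i < n := by omega
      rw [dif_pos hi, dif_pos hj]
      exact he (by simpa using hij)
    · rw [dif_neg hj]
      split_ifs
      · exact (hf _).1
      · exact le_rfl
  · intro i
    dsimp only
    split_ifs
    · exact hf _
    · simp
  · rw [Finset.sum_range]
    simp only [Fin.is_lt, dif_pos, Fin.eta]
    exact Equiv.sum_comp e f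
  · intro i hi
    refine ⟨(Finset.univ.filter (fun j : Fin n => j ≤ ⟨i, hi⟩)).map e.toEmbedding, ?_, ?_⟩
    · rw [Finset.card_map]
      have := Fin.card_Iic (⟨i, hi⟩ : Fin n)
      convert this using 2
      ext j; simp
    · intro a ha
      simp only [Finset.mem_map, Finset.mem_filter, Finset.mem_univ, true_and] at ha
      obtain ⟨j, hj, rfl⟩ := ha
      simp only [dif_pos hi]
      exact he hj

theorem cd3 (p : ℕ) [Fact p.Prime] (A B C : Finset (ZMod p)) (i j k : ℕ) (hA : A.card = i + 1)
    (hB : B.card = j + 1) (hC : C.card = k + 1) (h : p ≤ i + j + k + 1) (x : ZMod p) :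
    ∃ a ∈ A, ∃ b ∈ B, ∃ c ∈ C, x = a + b + c := by
  have hAn : A.Nonempty := Finset.card_pos.1 (by omega)
  have hBn : B.Nonempty := Finset.card_pos.1 (by omega)
  have hCn : C.Nonempty := Finset.card_pos.1 (by omega)
  have h1 := ZMod.cauchy_davenport Fact.out hAn hBn
  have h2 := ZMod.cauchy_davenport Fact.out (hAn.add hBn) hCn
  have h3 : (A + B + C) = Finset.univ := by
    apply Finset.eq_univ_of_card
    rw [ZMod.card]
    have := Finset.card_le_univ (A + B + C)
    rw [ZMod.card] at this
    omega
  have hx : x ∈ A + B + C := by rw [h3]; exact Finset.mem_univ _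
  obtain ⟨y, hy, c, hc, rfl⟩ := Finset.mem_add.1 hx
  obtain ⟨a, ha, b, hb, rfl⟩ := Finset.mem_add.1 hy
  exact ⟨a, ha, b, hb, c, hc, rfl⟩

theorem cd_units (p : ℕ) [Fact p.Prime] (A B C : Finset (ZMod p)ˣ) (i j k : ℕ) (hA : A.card = i + 1)
    (hB : B.card = j + 1) (hC : C.card = k + 1) (h : p ≤ i + j + k + 1) (x : ZMod p) :
    ∃ a ∈ A, ∃ b ∈ B, ∃ c ∈ C, x = (a : ZMod p) + b + c := by
  let em : (ZMod p)ˣ ↪ ZMod p := ⟨fun u => u, Units.val_injective⟩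
  obtain ⟨a, ha, b, hb, c, hc, hx⟩ := cd3 p (A.map em) (B.map em) (C.map em) i j k
    (by simpa using hA) (by simpa using hB) (by simpa using hC) h x
  obtain ⟨a, ha', rfl⟩ := Finset.mem_map.1 ha
  obtain ⟨b, hb', rfl⟩ := Finset.mem_map.1 hb
  obtain ⟨c, hc', rfl⟩ := Finset.mem_map.1 hc
  exact ⟨a, ha', b, hb', c, hc', hx⟩

noncomputable def avg {α : Type} [Fintype α] (f : α → ℝ) : ℝ := (∑ x, f x) / Fintype.card α

def Good (R : Type) [CommRing R] [Fintype Rˣ] (K L : ℝ → ℝ → ℝ → Prop) : Prop :=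
  ∀ f₁ f₂ f₃ : Rˣ → ℝ, (∀ x, f₁ x ∈ Set.Icc (0:ℝ) 1) → (∀ x, f₂ x ∈ Set.Icc (0:ℝ) 1) →
    (∀ x, f₃ x ∈ Set.Icc (0:ℝ) 1) → K (avg f₁) (avg f₂) (avg f₃) →
    ∀ x : R, ∃ a₁ a₂ a₃ : Rˣ, x = (a₁ : R) + a₂ + a₃ ∧ L (f₁ a₁) (f₂ a₂) (f₃ a₃)

theorem avg_equiv {α β : Type} [Fintype α] [Fintype β] (e : α ≃ β) (f : β → ℝ) :
    avg (fun x => f (e x)) = avg f := by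
  unfold avg
  rw [Equiv.sum_comp e f, Fintype.card_congr e]

theorem avg_mem {α : Type} [Fintype α] [Nonempty α] (f : α → ℝ) (hf : ∀ x, f x ∈ Set.Icc (0:ℝ) 1) :
    avg f ∈ Set.Icc (0:ℝ) 1 := by
  unfold avg
  have hc : (0:ℝ) < Fintype.card α := by exact_mod_cast Fintype.card_pos
  constructor
  · exact div_nonneg (Finset.sum_nonneg fun x _ => (hf x).1) hc.le
  · rw [div_le_one hc]
    have := Finset.sum_le_card_nsmul Finset.univ f 1 (fun x _ => (hf x).2)
    simpa using this

theorem avg_prod {α β : Type} [Fintype α] [Fintype β] (f : α × β → ℝ) :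
    avg (fun a => avg (fun b => f (a, b))) = avg f := by
  unfold avg
  rw [← Finset.sum_div, Fintype.sum_prod_type, Fintype.card_prod, div_div]
  push_cast
  rw [mul_comm]

theorem Good.equiv {R S : Type} [CommRing R] [CommRing S] [Fintype Rˣ] [Fintype Sˣ]
    (e : R ≃+* S) {K L : ℝ → ℝ → ℝ → Prop} (h : Good R K L) : Good S K L := by
  intro f₁ f₂ f₃ h₁ h₂ h₃ hK x
  let E : Rˣ ≃ Sˣ := (Units.mapEquiv e.toMulEquiv).toEquiv
  obtain ⟨a₁, a₂, a₃, hx, hL⟩ := h (fun a => f₁ (E a)) (fun a => f₂ (E a)) (fun a => f₃ (E a))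
    (fun a => h₁ _) (fun a => h₂ _) (fun a => h₃ _)
    (by rwa [avg_equiv, avg_equiv, avg_equiv]) (e.symm x)
  refine ⟨E a₁, E a₂, E a₃, ?_, hL⟩
  have h5 := congrArg e hx
  rw [map_add, map_add, e.apply_symm_apply] at h5
  exact h5

theorem Good.prod {R S : Type} [CommRing R] [CommRing S] [Fintype Rˣ] [Fintype Sˣ]
    [Fintype (R × S)ˣ] {K L M : ℝ → ℝ → ℝ → Prop} (h : Good R K L) (h' : Good S L M) :
    Good (R × S) K M := by
  intro f₁ f₂ f₃ h₁ h₂ h₃ hK x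
  let E : (R × S)ˣ ≃ Rˣ × Sˣ := MulEquiv.prodUnits.toEquiv
  have hE : ∀ f : (R × S)ˣ → ℝ, avg f = avg (fun a => avg (fun b => f (E.symm (a, b)))) := by
    intro f
    rw [avg_prod (fun ab => f (E.symm ab)), avg_equiv]
  rw [hE, hE, hE] at hK
  obtain ⟨a₁, a₂, a₃, hx, hL⟩ := h _ _ _ (fun a => avg_mem _ (fun b => h₁ _))
    (fun a => avg_mem _ (fun b => h₂ _)) (fun a => avg_mem _ (fun b => h₃ _)) hK x.1
  obtain ⟨b₁, b₂, b₃, hy, hM⟩ := h' _ _ _ (fun b => h₁ _) (fun b => h₂ _) (fun b => h₃ _) hL x.2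
  exact ⟨_, _, _, Prod.ext hx hy, hM⟩

def K0 (a b c : ℝ) : Prop := 5/8 * (a + b + c) < a * b + b * c + c * a

def K1 (a b c : ℝ) : Prop := 0 < a * b * c ∧ 3/2 < a + b + c

theorem K0_iff (a b c : ℝ) : K0 a b c ↔ 3 < GG (16/5*a-1) (16/5*b-1) (16/5*c-1) := by
  unfold K0 GG
  constructor <;> intro h <;> nlinarith

theorem good_prime (p : ℕ) [Fact p.Prime] (hp : 7 ≤ p) : Good (ZMod p) K0 K0 := by
  intro f₁ f₂ f₃ h₁ h₂ h₃ hK x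
  by_contra hcon
  push Not at hcon
  have hc : Fintype.card (ZMod p)ˣ = p - 1 := ZMod.card_units p
  obtain ⟨m, hm⟩ : ∃ m, p - 1 = 2 * m := by
    have := (Fact.out : p.Prime).eq_two_or_odd'
    rcases this with h | ⟨k, hk⟩
    · omega
    · exact ⟨k, by omega⟩
  obtain ⟨s, sa, sb, ss, sA⟩ := sorted_seq f₁ h₁
  obtain ⟨t, ta, tb, ts, tA⟩ := sorted_seq f₂ h₂
  obtain ⟨r, ra, rb, rs, rA⟩ := sorted_seq f₃ h₃
  rw [hc, hm] at ss ts rs sA tA rA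
  have hmpos : (0:ℝ) < m := by
    have : 0 < m := by omega
    exact_mod_cast this
  have hav : ∀ (f : (ZMod p)ˣ → ℝ) (s : ℕ → ℝ), ∑ i ∈ Finset.range (2*m), s i = ∑ x, f x →
      (∑ i ∈ Finset.range (2*m), (16/5 * s i - 1))/(2*m) = 16/5 * avg f - 1 := by
    intro f s hs
    unfold avg
    rw [Finset.sum_sub_distrib, ← Finset.mul_sum, hs, hc, hm]
    simp
    field_simp
  have anti : ∀ s : ℕ → ℝ, Antitone s → Antitone (fun i => 16/5 * s i - 1) := by
    intro s hs i j hij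
    have := hs hij
    dsimp only; linarith
  have main := seq_lemma m (by omega) (fun i => 16/5 * s i - 1) (fun i => 16/5 * t i - 1)
    (fun i => 16/5 * r i - 1) (anti s sa) (anti t ta) (anti r ra)
    (fun i => by have := sb i; constructor <;> linarith)
    (fun i => by have := tb i; constructor <;> linarith)
    (fun i => by have := rb i; constructor <;> linarith) (by
      intro i j k hi hj hk hijk
      obtain ⟨A, cA, hA⟩ := sA i hi
      obtain ⟨B, cB, hB⟩ := tA j hj
      obtain ⟨C, cC, hC⟩ := rA k hk
      obtain ⟨a, ha, b, hb, c, hc, hx⟩ := cd_units p A B C i j k cA cB cC (by omega) x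
      by_contra hlt
      push Not at hlt
      apply hcon a b c hx
      rw [K0_iff]
      have := sb i; have := tb j; have := rb k
      have := hA a ha; have := hB b hb; have := hC c hc
      apply GG_mono _ _ _ _ _ _ _ _ _ hlt <;> linarith)
  rw [hav f₁ s ss, hav f₂ t ts, hav f₃ r rs] at main
  rw [K0_iff] at hK
  linarith

theorem good_coprime (m : ℕ) (hsf : Squarefree m) (hc : Nat.Coprime m 30) :
    ∀ _ : Fintype (ZMod m)ˣ, Good (ZMod m) K0 K0 := by
  induction m using Nat.recOnPosPrimePosCoprime with
  | zero => simp at hsf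
  | one =>
    intro inst f₁ f₂ f₃ h₁ h₂ h₃ hK x
    refine ⟨1, 1, 1, Subsingleton.elim _ _, ?_⟩
    have : ∀ f : (ZMod 1)ˣ → ℝ, avg f = f 1 := by
      intro f
      unfold avg
      rw [Fintype.card_eq_one_iff.2 ⟨1, fun y => Subsingleton.elim _ _⟩]
      rw [Fintype.sum_subsingleton f 1]
      simp
    rwa [this, this, this] at hK
  | prime_pow p n hp hn =>
    intro inst
    have h1 : n = 1 := by
      rcases (Nat.squarefree_pow_iff hp.ne_one hn.ne').1 hsf with ⟨_, h⟩
      exact h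
    subst h1
    have : Fact p.Prime := ⟨hp⟩
    have hp7 : 7 ≤ p := by
      by_contra hlt
      push Not at hlt
      have := hp.two_le
      rw [pow_one] at hc
      interval_cases p <;> revert hc hp <;> decide
    have := good_prime p hp7
    have e : ZMod p ≃+* ZMod (p^1) := ZMod.ringEquivCongr (pow_one p).symm
    exact this.equiv e
  | coprime a b ha hb hab iha ihb =>
    intro inst
    have : NeZero a := ⟨by omega⟩
    have : NeZero b := ⟨by omega⟩
    have ga := iha (hsf.of_mul_left) (Nat.Coprime.coprime_mul_right hc) inferInstance
    have gb := ihb (hsf.of_mul_right) (Nat.Coprime.coprime_mul_left hc) inferInstance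
    exact (ga.prod gb).equiv (ZMod.chineseRemainder hab).symm

theorem lemR_aux (a0 a1 a2 a3 b0 b1 b2 b3 c0 c1 c2 c3 : ℝ)
    (ha3 : 0 ≤ a3) (ha2 : a3 ≤ a2) (ha1 : a2 ≤ a1) (ha0 : a1 ≤ a0) (ha : a0 ≤ 1)
    (hb3 : 0 ≤ b3) (hb2 : b3 ≤ b2) (hb1 : b2 ≤ b1) (hb0 : b1 ≤ b0) (hb : b0 ≤ 1)
    (hc3 : 0 ≤ c3) (hc2 : c3 ≤ c2) (hc1 : c2 ≤ c1) (hc0 : c1 ≤ c0) (hc : c0 ≤ 1)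
    (pa : 0 < a0) (pb : 0 < b0) (pc : 0 < c0)
    (h013 : 0 < b1 → 0 < c3 → a0 + b1 + c3 ≤ 3/2)
    (h022 : 0 < b2 → 0 < c2 → a0 + b2 + c2 ≤ 3/2)
    (h031 : 0 < b3 → 0 < c1 → a0 + b3 + c1 ≤ 3/2)
    (h103 : 0 < a1 → 0 < c3 → a1 + b0 + c3 ≤ 3/2)
    (h112 : 0 < a1 → 0 < b1 → 0 < c2 → a1 + b1 + c2 ≤ 3/2)
    (h121 : 0 < a1 → 0 < b2 → 0 < c1 → a1 + b2 + c1 ≤ 3/2)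
    (h130 : 0 < a1 → 0 < b3 → a1 + b3 + c0 ≤ 3/2)
    (h202 : 0 < a2 → 0 < c2 → a2 + b0 + c2 ≤ 3/2)
    (h211 : 0 < a2 → 0 < b1 → 0 < c1 → a2 + b1 + c1 ≤ 3/2)
    (h220 : 0 < a2 → 0 < b2 → a2 + b2 + c0 ≤ 3/2)
    (h301 : 0 < a3 → 0 < c1 → a3 + b0 + c1 ≤ 3/2)
    (h310 : 0 < a3 → 0 < b1 → a3 + b1 + c0 ≤ 3/2) :
    (a0+a1+a2+a3)+(b0+b1+b2+b3)+(c0+c1+c2+c3) ≤ 13/2 ∧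
    (1/2 < a0+a1+a2+a3 → 1/2 < b0+b1+b2+b3 → 1/2 < c0+c1+c2+c3 →
    (a0+a1+a2+a3)+(b0+b1+b2+b3)+(c0+c1+c2+c3) ≤ 6) := by
  have sp : ∀ a1 a2 a3 : ℝ, 0 ≤ a3 → a3 ≤ a2 → a2 ≤ a1 → 
    (a1 = 0 ∧ a2 = 0 ∧ a3 = 0) ∨ (0 < a1 ∧ a2 = 0 ∧ a3 = 0) ∨ (0 < a1 ∧ 0 < a2 ∧ a3 = 0) ∨
    (0 < a1 ∧ 0 < a2 ∧ 0 < a3) := by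
    intro a1 a2 a3 h3 h2 h1
    by_cases k3 : 0 < a3
    · exact .inr (.inr (.inr ⟨by linarith, by linarith, k3⟩))
    by_cases k2 : 0 < a2
    · exact .inr (.inr (.inl ⟨by linarith, by linarith, by linarith⟩))
    by_cases k1 : 0 < a1
    · exact .inr (.inl ⟨by linarith, by linarith, by linarith⟩)
    exact .inl ⟨by linarith, by linarith, by linarith⟩
  rcases sp a1 a2 a3 ha3 ha2 ha1 with ⟨i1, i2, i3⟩ | ⟨i1, i2, i3⟩ | ⟨i1, i2, i3⟩ | ⟨i1, i2, i3⟩ <;>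
  rcases sp b1 b2 b3 hb3 hb2 hb1 with ⟨j1, j2, j3⟩ | ⟨j1, j2, j3⟩ | ⟨j1, j2, j3⟩ | ⟨j1, j2, j3⟩ <;>
  rcases sp c1 c2 c3 hc3 hc2 hc1 with ⟨k1, k2, k3⟩ | ⟨k1, k2, k3⟩ | ⟨k1, k2, k3⟩ | ⟨k1, k2, k3⟩ <;>
  simp only [i1, i2, i3, j1, j2, j3, k1, k2, k3, lt_irrefl, forall_const, IsEmpty.forall_iff, true_imp_iff, false_imp_iff] at h013 h022 h031 h103 h112 h121 h130 h202 h211 h220 h301 h310 <;>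
  refine ⟨by linarith, fun q1 q2 q3 => by linarith⟩

def RR (A B C : ℝ) : Prop :=
  A = 0 ∨ B = 0 ∨ C = 0 ∨ A + B + C ≤ 6 ∨ (A + B + C ≤ 13/2 ∧ (A ≤ 1/2 ∨ B ≤ 1/2 ∨ C ≤ 1/2))

theorem lemR5 (f₁ f₂ f₃ : (ZMod 5)ˣ → ℝ) (h₁ : ∀ x, f₁ x ∈ Set.Icc (0:ℝ) 1)
    (h₂ : ∀ x, f₂ x ∈ Set.Icc (0:ℝ) 1) (h₃ : ∀ x, f₃ x ∈ Set.Icc (0:ℝ) 1) (x : ZMod 5)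
    (hcon : ∀ a b c : (ZMod 5)ˣ, x = (a : ZMod 5) + b + c → ¬ K1 (f₁ a) (f₂ b) (f₃ c)) :
    RR (∑ x, f₁ x) (∑ x, f₂ x) (∑ x, f₃ x) := by
  have : Fact (Nat.Prime 5) := ⟨by norm_num⟩
  have hc : Fintype.card (ZMod 5)ˣ = 4 := ZMod.card_units 5
  obtain ⟨s, sa, sb, ss, sA⟩ := sorted_seq f₁ h₁
  obtain ⟨t, ta, tb, ts, tA⟩ := sorted_seq f₂ h₂
  obtain ⟨r, ra, rb, rs, rA⟩ := sorted_seq f₃ h₃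
  rw [hc] at ss ts rs sA tA rA
  rw [← ss, ← ts, ← rs]
  have key : ∀ i j k, i < 4 → j < 4 → k < 4 → i + j + k = 4 → 0 < s i → 0 < t j → 0 < r k →
      s i + t j + r k ≤ 3/2 := by
    intro i j k hi hj hk hijk pi pj pk
    obtain ⟨A, cA, hA⟩ := sA i hi
    obtain ⟨B, cB, hB⟩ := tA j hj
    obtain ⟨C, cC, hC⟩ := rA k hk
    obtain ⟨a, ha, b, hb, c, hc, hx⟩ := cd_units 5 A B C i j k cA cB cC (by omega) x
    by_contra hlt
    push Not at hlt
    apply hcon a b c hx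
    have := hA a ha; have := hB b hb; have := hC c hc
    have p1 : 0 < f₁ a := by linarith
    have p2 : 0 < f₂ b := by linarith
    have p3 : 0 < f₃ c := by linarith
    exact ⟨by positivity, by linarith⟩
  have z : ∀ s : ℕ → ℝ, Antitone s → (∀ i, 0 ≤ s i ∧ s i ≤ 1) → ¬ 0 < s 0 →
      ∑ i ∈ Finset.range 4, s i = 0 := by
    intro s sa sb h0
    apply Finset.sum_eq_zero
    intro i _
    have := sa (Nat.zero_le i); have := (sb i).1
    linarith
  by_cases pa : 0 < s 0
  swap
  · exact .inl (z s sa sb pa)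
  by_cases pb : 0 < t 0
  swap
  · exact .inr (.inl (z t ta tb pb))
  by_cases pc : 0 < r 0
  swap
  · exact .inr (.inr (.inl (z r ra rb pc)))
  have m := lemR_aux (s 0) (s 1) (s 2) (s 3) (t 0) (t 1) (t 2) (t 3) (r 0) (r 1) (r 2) (r 3)
    (sb 3).1 (sa (by norm_num)) (sa (by norm_num)) (sa (by norm_num)) (sb 0).2
    (tb 3).1 (ta (by norm_num)) (ta (by norm_num)) (ta (by norm_num)) (tb 0).2
    (rb 3).1 (ra (by norm_num)) (ra (by norm_num)) (ra (by norm_num)) (rb 0).2 pa pb pc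
    (key 0 1 3 (by norm_num) (by norm_num) (by norm_num) (by norm_num) pa)
    (key 0 2 2 (by norm_num) (by norm_num) (by norm_num) (by norm_num) pa)
    (key 0 3 1 (by norm_num) (by norm_num) (by norm_num) (by norm_num) pa)
    (fun h h' => key 1 0 3 (by norm_num) (by norm_num) (by norm_num) (by norm_num) h pb h')
    (key 1 1 2 (by norm_num) (by norm_num) (by norm_num) (by norm_num))
    (key 1 2 1 (by norm_num) (by norm_num) (by norm_num) (by norm_num))
    (fun h h' => key 1 3 0 (by norm_num) (by norm_num) (by norm_num) (by norm_num) h h' pc)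
    (fun h h' => key 2 0 2 (by norm_num) (by norm_num) (by norm_num) (by norm_num) h pb h')
    (key 2 1 1 (by norm_num) (by norm_num) (by norm_num) (by norm_num))
    (fun h h' => key 2 2 0 (by norm_num) (by norm_num) (by norm_num) (by norm_num) h h' pc)
    (fun h h' => key 3 0 1 (by norm_num) (by norm_num) (by norm_num) (by norm_num) h pb h')
    (fun h h' => key 3 1 0 (by norm_num) (by norm_num) (by norm_num) (by norm_num) h h' pc)
  simp only [Finset.sum_range_succ, Finset.sum_range_zero, zero_add]
  obtain ⟨m1, m2⟩ := m
  refine .inr (.inr (.inr ?_))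
  by_contra hn
  push Not at hn
  obtain ⟨n1, n2⟩ := hn
  obtain ⟨n3, n4, n5⟩ := n2 m1
  linarith [m2 n3 n4 n5]

theorem nK_sum (a b c : ℝ) (ha : 0 ≤ a) (hb : 0 ≤ b) (hc : 0 ≤ c) (h : a + b + c ≤ 15/8) :
    ¬ K0 a b c := by
  unfold K0
  nlinarith [sq_nonneg (a-b), sq_nonneg (b-c), sq_nonneg (c-a),
    mul_nonneg (by linarith : 0 ≤ a+b+c) (by linarith : 0 ≤ 15/8 - (a+b+c))]

theorem nK_zero (a b c : ℝ) (ha : 0 ≤ a) (hb : 0 ≤ b) (ha' : a ≤ 1) (hb' : b ≤ 1) (hc : c = 0) :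
    ¬ K0 a b c := by
  unfold K0
  subst hc
  nlinarith

theorem nK_two (a b c : ℝ) (ha : 0 ≤ a) (hb : 0 ≤ b) (hc : 0 ≤ c) (ha' : a ≤ 1) (hb' : b ≤ 1/2)
    (hc' : c ≤ 1/2) : ¬ K0 a b c := by
  unfold K0
  rcases le_total (b+c) (5/8) with h | h
  · nlinarith
  · nlinarith

theorem K0_rot (a b c : ℝ) : K0 a b c ↔ K0 b c a := by
  unfold K0; constructor <;> intro h <;> linarith

theorem comb0 (A B C A' B' C' : ℝ) (hA : A ∈ Set.Icc (0:ℝ) 4) (hB : B ∈ Set.Icc (0:ℝ) 4)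
    (hC : C ∈ Set.Icc (0:ℝ) 4) (hA' : A' ∈ Set.Icc (0:ℝ) 4) (hB' : B' ∈ Set.Icc (0:ℝ) 4)
    (hC' : C' ∈ Set.Icc (0:ℝ) 4) (h1 : RR A B C) (h2 : RR A' B' C') :
    ¬ K0 ((A+A')/8) ((B+B')/8) ((C+C')/8) := by
  obtain ⟨a0, a4⟩ := hA
  obtain ⟨b0, b4⟩ := hB
  obtain ⟨c0, c4⟩ := hC
  obtain ⟨a0', a4'⟩ := hA'
  obtain ⟨b0', b4'⟩ := hB'
  obtain ⟨c0', c4'⟩ := hC'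
  by_cases hs : A + B + C + A' + B' + C' ≤ 15
  · exact nK_sum _ _ _ (by linarith) (by linarith) (by linarith) (by linarith)
  have z1 : A = 0 ∨ B = 0 ∨ C = 0 := by
    rcases h1 with h | h | h | h | h
    · exact .inl h
    · exact .inr (.inl h)
    · exact .inr (.inr h)
    all_goals
      rcases h2 with h' | h' | h' | h' | h' <;> exfalso <;> apply hs <;> linarith
  have z2 : A' = 0 ∨ B' = 0 ∨ C' = 0 := by
    rcases h2 with h | h | h | h | h
    · exact .inl h
    · exact .inr (.inl h)
    · exact .inr (.inr h)
    all_goals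
      rcases z1 with h' | h' | h' <;> exfalso <;> apply hs <;> linarith
  rcases z1 with h | h | h <;> rcases z2 with h' | h' | h' <;> subst h <;> subst h' <;>
  first
  | exact nK_zero _ _ _ (by linarith) (by linarith) (by linarith) (by linarith) (by linarith)
  | exact nK_two _ _ _ (by linarith) (by linarith) (by linarith) (by linarith) (by linarith) (by linarith)
  | (rw [K0_rot]
     first
     | exact nK_zero _ _ _ (by linarith) (by linarith) (by linarith) (by linarith) (by linarith)
     | exact nK_two _ _ _ (by linarith) (by linarith) (by linarith) (by linarith) (by linarith) (by linarith)
     | (rw [K0_rot]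
        first
        | exact nK_zero _ _ _ (by linarith) (by linarith) (by linarith) (by linarith) (by linarith)
        | exact nK_two _ _ _ (by linarith) (by linarith) (by linarith) (by linarith) (by linarith) (by linarith)))

set_option maxHeartbeats 4000000 in
theorem comb1 (A B C A' B' C' : ℝ) (hA : A ∈ Set.Icc (0:ℝ) 4) (hB : B ∈ Set.Icc (0:ℝ) 4)
    (hC : C ∈ Set.Icc (0:ℝ) 4) (hA' : A' ∈ Set.Icc (0:ℝ) 4) (hB' : B' ∈ Set.Icc (0:ℝ) 4)
    (hC' : C' ∈ Set.Icc (0:ℝ) 4) (h1 : RR A B C') (h2 : RR A B' C) (h3 : RR A' B C) :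
    ¬ K0 ((A+A')/8) ((B+B')/8) ((C+C')/8) := by
  obtain ⟨a0, a4⟩ := hA
  obtain ⟨b0, b4⟩ := hB
  obtain ⟨c0, c4⟩ := hC
  obtain ⟨a0', a4'⟩ := hA'
  obtain ⟨b0', b4'⟩ := hB'
  obtain ⟨c0', c4'⟩ := hC'
  by_cases hs : A + B + C + A' + B' + C' ≤ 15
  · exact nK_sum _ _ _ (by linarith) (by linarith) (by linarith) (by linarith)
  -- reduce to pairs of zeros
  have z : (A = 0 ∧ A' = 0) ∨ (B = 0 ∧ B' = 0) ∨ (C = 0 ∧ C' = 0) ∨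
      ((A = 0 ∨ A' = 0) ∧ (B = 0 ∨ B' = 0)) ∨ ((A = 0 ∨ A' = 0) ∧ (C = 0 ∨ C' = 0)) ∨
      ((B = 0 ∨ B' = 0) ∧ (C = 0 ∨ C' = 0)) := by
    by_contra hz
    rcases h1 with h | h | h | h | ⟨h, h | h | h⟩ <;>
    rcases h2 with k | k | k | k | ⟨k, k | k | k⟩ <;>
    rcases h3 with l | l | l | l | ⟨l, l | l | l⟩ <;>
    first
    | (apply hs; linarith)
    | (exfalso; simp [h, k, l] at hz)
  rcases z with ⟨h, h'⟩ | ⟨h, h'⟩ | ⟨h, h'⟩ | ⟨h, h'⟩ | ⟨h, h'⟩ | ⟨h, h'⟩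
  · rw [K0_rot]
    exact nK_zero _ _ _ (by linarith) (by linarith) (by linarith) (by linarith) (by linarith)
  · rw [K0_rot, K0_rot]
    exact nK_zero _ _ _ (by linarith) (by linarith) (by linarith) (by linarith) (by linarith)
  · exact nK_zero _ _ _ (by linarith) (by linarith) (by linarith) (by linarith) (by linarith)
  · rw [K0_rot, K0_rot]
    rcases h with h | h <;> rcases h' with h' | h' <;>
    exact nK_two _ _ _ (by linarith) (by linarith) (by linarith) (by linarith) (by linarith) (by linarith)
  · rw [K0_rot]
    rcases h with h | h <;> rcases h' with h' | h' <;>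
    exact nK_two _ _ _ (by linarith) (by linarith) (by linarith) (by linarith) (by linarith) (by linarith)
  · rcases h with h | h <;> rcases h' with h' | h' <;>
    exact nK_two _ _ _ (by linarith) (by linarith) (by linarith) (by linarith) (by linarith) (by linarith)

theorem good15 [Fintype (ZMod 3 × ZMod 5)ˣ] : Good (ZMod 3 × ZMod 5) K0 K1 := by
  intro f₁ f₂ f₃ h₁ h₂ h₃ hK x
  by_contra hcon
  push Not at hcon
  let E : (ZMod 3 × ZMod 5)ˣ ≃ (ZMod 3)ˣ × (ZMod 5)ˣ := MulEquiv.prodUnits.toEquiv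
  have hc : Fintype.card (ZMod 5)ˣ = 4 := by decide
  have hc3 : Fintype.card (ZMod 3)ˣ = 2 := by decide
  have hu : (Finset.univ : Finset (ZMod 3)ˣ) = {1, -1} := by decide
  have hE : ∀ f : (ZMod 3 × ZMod 5)ˣ → ℝ, avg f =
      (∑ b, f (E.symm (1, b)) + ∑ b, f (E.symm (-1, b)))/8 := by
    intro f
    rw [← avg_equiv E.symm]
    unfold avg
    rw [Fintype.sum_prod_type, Fintype.card_prod, hc, hc3, hu, Finset.sum_pair (by decide)]
    norm_num
  have hI : ∀ f : (ZMod 3 × ZMod 5)ˣ → ℝ, (∀ x, f x ∈ Set.Icc (0:ℝ) 1) → ∀ e,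
      ∑ b, f (E.symm (e, b)) ∈ Set.Icc (0:ℝ) 4 := by
    intro f hf e
    constructor
    · exact Finset.sum_nonneg fun b _ => (hf _).1
    · have := Finset.sum_le_card_nsmul Finset.univ (fun b => f (E.symm (e, b))) 1 (fun b _ => (hf _).2)
      rw [Finset.card_univ, hc] at this
      simpa using this
  have hR : ∀ e₁ e₂ e₃ : (ZMod 3)ˣ, x.1 = (e₁ : ZMod 3) + e₂ + e₃ →
      RR (∑ b, f₁ (E.symm (e₁, b))) (∑ b, f₂ (E.symm (e₂, b))) (∑ b, f₃ (E.symm (e₃, b))) := by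
    intro e₁ e₂ e₃ he
    apply lemR5 _ _ _ (fun b => h₁ _) (fun b => h₂ _) (fun b => h₃ _) x.2
    intro a b c habc
    exact hcon _ _ _ (Prod.ext he habc)
  rw [hE, hE, hE] at hK
  have hx : x.1 = 0 ∨ x.1 = 1 ∨ x.1 = 2 := by
    generalize x.1 = y
    revert y; decide
  rcases hx with hx | hx | hx
  · exact comb0 _ _ _ _ _ _ (hI f₁ h₁ 1) (hI f₂ h₂ 1) (hI f₃ h₃ 1) (hI f₁ h₁ (-1)) (hI f₂ h₂ (-1))
      (hI f₃ h₃ (-1)) (hR 1 1 1 (by rw [hx]; decide)) (hR (-1) (-1) (-1) (by rw [hx]; decide)) hK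
  · exact comb1 _ _ _ _ _ _ (hI f₁ h₁ 1) (hI f₂ h₂ 1) (hI f₃ h₃ 1) (hI f₁ h₁ (-1)) (hI f₂ h₂ (-1))
      (hI f₃ h₃ (-1)) (hR 1 1 (-1) (by rw [hx]; decide)) (hR 1 (-1) 1 (by rw [hx]; decide))
      (hR (-1) 1 1 (by rw [hx]; decide)) hK
  · refine comb1 _ _ _ _ _ _ (hI f₁ h₁ (-1)) (hI f₂ h₂ (-1)) (hI f₃ h₃ (-1)) (hI f₁ h₁ 1) (hI f₂ h₂ 1)
      (hI f₃ h₃ 1) (hR (-1) (-1) 1 (by rw [hx]; decide)) (hR (-1) 1 (-1) (by rw [hx]; decide))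
      (hR 1 (-1) (-1) (by rw [hx]; decide)) ?_
    rw [add_comm (∑ b, f₁ (E.symm (1, b))), add_comm (∑ b, f₂ (E.symm (1, b))),
      add_comm (∑ b, f₃ (E.symm (1, b)))] at hK
    exact hK

theorem good_all (m : ℕ) (hodd : Odd m) (hsf : Squarefree m) :
    ∃ k : ℕ, k ≠ 0 ∧ ∀ _ : Fintype (ZMod m × ZMod k)ˣ, Good (ZMod m × ZMod k) K0 K1 := by
  have hm0 : m ≠ 0 := hsf.ne_zero
  have : NeZero m := ⟨hm0⟩
  set k := 15 / Nat.gcd 15 m with hk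
  set m' := m / Nat.gcd m 15 with hm'
  have hg : 0 < Nat.gcd 15 m := Nat.gcd_pos_of_pos_left _ (by norm_num)
  have hk0 : k ≠ 0 := (Nat.div_pos (Nat.le_of_dvd (by norm_num) (Nat.gcd_dvd_left _ _)) hg).ne'
  have : NeZero k := ⟨hk0⟩
  have hsf15 : Squarefree 15 := by
    rw [show 15 = 3 * 5 by norm_num, Nat.squarefree_mul (by norm_num)]
    exact ⟨Nat.prime_three.squarefree, Nat.prime_five.squarefree⟩
  have ck : Nat.Coprime k m := Nat.coprime_div_gcd_of_squarefree hsf15 hm0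
  have cm' : Nat.Coprime m' 15 := Nat.coprime_div_gcd_of_squarefree hsf (by norm_num)
  have hd : m' ∣ m := Nat.div_dvd_of_dvd (Nat.gcd_dvd_left _ _)
  have hm'0 : m' ≠ 0 := fun h => hm0 (Nat.eq_zero_of_zero_dvd (h ▸ hd))
  have : NeZero m' := ⟨hm'0⟩
  have hmul : m' * 15 = m * k := by
    rw [hm', hk, Nat.gcd_comm m 15, ← Nat.mul_div_assoc _ (Nat.gcd_dvd_left 15 m), mul_comm m 15,
      mul_comm _ 15, ← Nat.mul_div_assoc _ (Nat.gcd_dvd_right 15 m)]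
  have c30 : Nat.Coprime m' 30 := by
    rw [show 30 = 15 * 2 by norm_num]
    exact cm'.mul_right ((Nat.coprime_two_right).2 (hodd.of_dvd_nat hd))
  refine ⟨k, hk0, fun _ => ?_⟩
  have g1 := good_coprime m' (hsf.squarefree_of_dvd hd) c30 inferInstance
  have g2 : Good (ZMod 15) K0 K1 :=
    (good15).equiv (ZMod.chineseRemainder (show Nat.Coprime 3 5 by norm_num)).symm
  have g3 : Good (ZMod (m' * 15)) K0 K1 := (g1.prod g2).equiv (ZMod.chineseRemainder cm').symm
  exact g3.equiv ((ZMod.ringEquivCongr hmul).trans (ZMod.chineseRemainder ck.symm))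

theorem stmt4 (m : ℕ) [NeZero m] (hodd : Odd m) (hsf : Squarefree m)
    (f : (ZMod m)ˣ → ℝ) (hf : ∀ x, f x ∈ Set.Icc (0 : ℝ) 1)
    (hsum : ∑ x : (ZMod m)ˣ, f x > 5 / 8 * (Nat.totient m : ℝ)) :
    ∀ x : ZMod m, ∃ a₁ a₂ a₃ : (ZMod m)ˣ,
      x = (a₁ : ZMod m) + (a₂ : ZMod m) + (a₃ : ZMod m) ∧
      f a₁ * f a₂ * f a₃ > 0 ∧ f a₁ + f a₂ + f a₃ > 3 / 2 := by
  intro x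
  obtain ⟨k, hk, hgood⟩ := good_all m hodd hsf
  have : NeZero k := ⟨hk⟩
  have hg := hgood inferInstance
  let E : (ZMod m × ZMod k)ˣ ≃ (ZMod m)ˣ × (ZMod k)ˣ := MulEquiv.prodUnits.toEquiv
  have hav : avg (fun a => f (E a).1) = avg f := by
    rw [avg_equiv E (fun ab => f ab.1), ← avg_prod]
    congr 1
    ext a
    unfold avg
    have : (Fintype.card (ZMod k)ˣ : ℝ) ≠ 0 := by exact_mod_cast Fintype.card_ne_zero
    simp only [Finset.sum_const, Finset.card_univ, nsmul_eq_mul]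
    field_simp
  have h58 : 5/8 < avg f := by
    unfold avg
    have : (0:ℝ) < Fintype.card (ZMod m)ˣ := by exact_mod_cast Fintype.card_pos
    rw [lt_div_iff₀ this, ZMod.card_units_eq_totient]
    exact hsum
  obtain ⟨a₁, a₂, a₃, hx, hL⟩ := hg (fun a => f (E a).1) (fun a => f (E a).1) (fun a => f (E a).1)
    (fun a => hf _) (fun a => hf _) (fun a => hf _) (by rw [hav]; unfold K0; nlinarith) (x, 0)
  refine ⟨(E a₁).1, (E a₂).1, (E a₃).1, ?_, hL.1, hL.2⟩
  exact congrArg Prod.fst hx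
end

section
/- Let m be an odd squarefree positive integer divisible by 3, and let f : (Z/mZ)* → (0,1] be a function. For i = 1, 2 let αᵢ be the average of f over those units r ∈ (Z/mZ)* with r ≡ i (mod 3). Suppose 2α₁ + α₂ > 3/2 and 2α₂ + α₁ > 3/2. Then for every x ∈ Z/mZ there exist units a₁, a₂, a₃ ∈ (Z/mZ)* with x = a₁ + a₂ + a₃ such that f(a₁) + f(a₂) + f(a₃) > 3/2. -/
/-- The three-function averaging property for the units of a ring. -/
def GoodRing (R : Type) [CommRing R] [Fintype Rˣ] : Prop :=
  ∀ f g h : Rˣ → ℝ, 3 / 2 * (Fintype.card Rˣ : ℝ) < ∑ r, f r + ∑ r, g r + ∑ r, h r →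
    ∀ x : R, ∃ a b c : Rˣ, x = a + b + c ∧ 3 / 2 < f a + g b + h c

theorem GoodRing.transfer {R S : Type} [CommRing R] [Fintype Rˣ] [CommRing S] [Fintype Sˣ]
    (e : R ≃+* S) (hR : GoodRing R) : GoodRing S := by
  intro f g h hs x
  let u : Rˣ ≃* Sˣ := Units.mapEquiv e.toMulEquiv
  obtain ⟨a, b, c, hx, hv⟩ := hR (fun r => f (u r)) (fun r => g (u r)) (fun r => h (u r)) (by
    have k : ∀ F : Sˣ → ℝ, ∑ r, F (u r) = ∑ r, F r := fun F => Equiv.sum_comp u.toEquiv F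
    rw [k f, k g, k h, Fintype.card_congr u.toEquiv]
    exact hs) (e.symm x)
  refine ⟨u a, u b, u c, ?_, hv⟩
  have := congrArg e hx
  simpa [u] using this

theorem GoodRing.prod {R S : Type} [CommRing R] [Fintype Rˣ] [CommRing S] [Fintype Sˣ]
    [Fintype (R × S)ˣ] (hR : GoodRing R) (hS : GoodRing S) : GoodRing (R × S) := by
  intro f g h hs x
  let u : (R × S)ˣ ≃* Rˣ × Sˣ := MulEquiv.prodUnits
  have key : ∀ F : (R × S)ˣ → ℝ, ∑ r, F r = ∑ r, ∑ s, F (u.symm (r, s)) := by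
    intro F
    rw [← Equiv.sum_comp u.symm.toEquiv F, Fintype.sum_prod_type]
    rfl
  have hc : Fintype.card (R × S)ˣ = Fintype.card Rˣ * Fintype.card Sˣ := by
    rw [Fintype.card_congr u.toEquiv, Fintype.card_prod]
  have hpos : (0 : ℝ) < Fintype.card Sˣ := by exact_mod_cast Fintype.card_pos
  rw [key, key, key, hc] at hs
  obtain ⟨a, b, c, hx, hv⟩ := hR
    (fun r => (∑ s, f (u.symm (r, s))) / Fintype.card Sˣ)
    (fun r => (∑ s, g (u.symm (r, s))) / Fintype.card Sˣ)
    (fun r => (∑ s, h (u.symm (r, s))) / Fintype.card Sˣ) (by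
      rw [← Finset.sum_div, ← Finset.sum_div, ← Finset.sum_div, ← add_div, ← add_div,
        lt_div_iff₀ hpos]
      push_cast at hs
      linarith) x.1
  rw [← add_div, ← add_div, lt_div_iff₀ hpos] at hv
  obtain ⟨a', b', c', hx', hv'⟩ := hS (fun s => f (u.symm (a, s))) (fun s => g (u.symm (b, s)))
    (fun s => h (u.symm (c, s))) hv x.2
  refine ⟨u.symm (a, a'), u.symm (b, b'), u.symm (c, c'), ?_, hv'⟩
  ext
  · exact hx
  · exact hx'

theorem exists_sorted {U : Type} [Fintype U] (n : ℕ) (hn : Fintype.card U = n) (f : U → ℝ) :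
    ∃ e : Fin n ≃ U, ∀ i j, i ≤ j → f (e j) ≤ f (e i) := by
  let e0 : Fin n ≃ U := (Fintype.equivFinOfCardEq hn).symm
  let s := Tuple.sort (fun i => - f (e0 i))
  refine ⟨s.trans e0, fun i j hij => ?_⟩
  have := Tuple.monotone_sort (fun i => - f (e0 i)) hij
  simpa [s] using this

open scoped Pointwise in
theorem cd_three {p : ℕ} [Fact p.Prime] (A B C : Finset (ZMod p)) (hA : A.Nonempty)
    (hB : B.Nonempty) (hC : C.Nonempty) (hcard : p + 2 ≤ A.card + B.card + C.card) (x : ZMod p) :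
    ∃ a ∈ A, ∃ b ∈ B, ∃ c ∈ C, x = a + b + c := by
  classical
  have h := ZMod.cauchy_davenport (Fact.out : p.Prime) hA hB
  let D : Finset (ZMod p) := C.image (fun c => x - c)
  have hD : D.card = C.card := Finset.card_image_of_injective _ (sub_right_injective)
  have hCp : C.card ≤ p := by simpa [ZMod.card] using Finset.card_le_univ C
  have hAp : A.card ≤ p := by simpa [ZMod.card] using Finset.card_le_univ A
  have hBp : B.card ≤ p := by simpa [ZMod.card] using Finset.card_le_univ B
  have hlt : p < (A + B).card + D.card := by
    rw [hD]
    have := hA.card_pos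
    have := hC.card_pos
    rcases le_total p (A.card + B.card - 1) with h' | h'
    · rw [min_eq_left h'] at h; omega
    · rw [min_eq_right h'] at h; omega
  have : ¬ Disjoint (A + B) D := by
    intro hd
    have h1 := Finset.card_union_of_disjoint hd
    have h2 := Finset.card_le_univ (A + B ∪ D)
    rw [ZMod.card] at h2
    omega
  rw [Finset.not_disjoint_iff] at this
  obtain ⟨y, hy, hy'⟩ := this
  obtain ⟨a, ha, b, hb, rfl⟩ := Finset.mem_add.1 hy
  obtain ⟨c, hc, hxc⟩ := Finset.mem_image.1 hy'
  exact ⟨a, ha, b, hb, c, hc, by rw [← hxc]; ring⟩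

theorem exists_perms (h : ℕ) (hh : 2 ≤ h) : ∃ s t : Equiv.Perm (Fin (2 * h)),
    ∀ i : Fin (2 * h), 2 * h ≤ (i : ℕ) + s i + t i := by
  let s : Fin (2 * h) → Fin (2 * h) := fun i =>
    if hi : (i : ℕ) < h then ⟨i + h, by omega⟩ else ⟨i - h, by omega⟩
  let t : Fin (2 * h) → Fin (2 * h) := fun i =>
    if hi : (i : ℕ) < h then ⟨2 * h - 1 - 2 * i, by omega⟩ else ⟨4 * h - 2 - 2 * i, by omega⟩
  have hs : Function.Injective s := by
    intro i j hij
    simp only [s] at hij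
    ext
    split_ifs at hij <;> simp only [Fin.mk.injEq] at hij <;> omega
  have ht : Function.Injective t := by
    intro i j hij
    simp only [t] at hij
    ext
    split_ifs at hij <;> simp only [Fin.mk.injEq] at hij <;> omega
  refine ⟨Equiv.ofBijective s (Finite.injective_iff_bijective.1 hs),
    Equiv.ofBijective t (Finite.injective_iff_bijective.1 ht), fun i => ?_⟩
  simp only [Equiv.ofBijective_apply, s, t]
  split_ifs <;> simp only <;> omega

theorem goodRing_prime (p : ℕ) [Fact p.Prime] (hp : 5 ≤ p) : GoodRing (ZMod p) := by
  classical
  intro f g h hs x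
  obtain ⟨k, hk⟩ : ∃ k, p = 2 * k + 1 := (Fact.out : p.Prime).odd_of_ne_two (by omega)
  have hcard : Fintype.card (ZMod p)ˣ = 2 * k := by
    rw [ZMod.card_units_eq_totient, Nat.totient_prime Fact.out]; omega
  obtain ⟨s, t, hst⟩ := exists_perms k (by omega)
  obtain ⟨e₁, he₁⟩ := exists_sorted _ hcard f
  obtain ⟨e₂, he₂⟩ := exists_sorted _ hcard g
  obtain ⟨e₃, he₃⟩ := exists_sorted _ hcard h
  obtain ⟨i, hi⟩ : ∃ i, 3 / 2 < f (e₁ i) + g (e₂ (s i)) + h (e₃ (t i)) := by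
    by_contra! hcon
    have h1 := Finset.sum_le_sum (s := Finset.univ) (fun i _ => hcon i)
    rw [Finset.sum_add_distrib, Finset.sum_add_distrib, Equiv.sum_comp e₁ f,
      Equiv.sum_comp s (fun i => g (e₂ i)), Equiv.sum_comp t (fun i => h (e₃ i)),
      Equiv.sum_comp e₂ g, Equiv.sum_comp e₃ h] at h1
    rw [hcard] at hs
    simp only [Finset.sum_const, Finset.card_univ, Fintype.card_fin, nsmul_eq_mul] at h1
    linarith
  let T : (Fin (2 * k) ≃ (ZMod p)ˣ) → Fin (2 * k) → Finset (ZMod p) :=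
    fun e i => (Finset.Iic i).image (fun j => ((e j : (ZMod p)ˣ) : ZMod p))
  have hT : ∀ e i, (T e i).card = (i : ℕ) + 1 := by
    intro e i
    change (Finset.image (Units.val ∘ e) (Finset.Iic i)).card = _
    rw [Finset.card_image_of_injective _ (Units.val_injective.comp e.injective), Fin.card_Iic]
  have hne : ∀ e i, (T e i).Nonempty := fun e i => by
    rw [← Finset.card_pos, hT]; omega
  obtain ⟨a, ha, b, hb, c, hc, hx⟩ := cd_three (T e₁ i) (T e₂ (s i)) (T e₃ (t i))
    (hne _ _) (hne _ _) (hne _ _) (by rw [hT, hT, hT]; have := hst i; omega) x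
  obtain ⟨a', ha', rfl⟩ := Finset.mem_image.1 ha
  obtain ⟨b', hb', rfl⟩ := Finset.mem_image.1 hb
  obtain ⟨c', hc', rfl⟩ := Finset.mem_image.1 hc
  refine ⟨_, _, _, hx, ?_⟩
  have h1 := he₁ _ _ (Finset.mem_Iic.1 ha')
  have h2 := he₂ _ _ (Finset.mem_Iic.1 hb')
  have h3 := he₃ _ _ (Finset.mem_Iic.1 hc')
  linarith

theorem goodRing_zmod (n : ℕ) : ∀ [Fintype (ZMod n)ˣ], Odd n → Squarefree n → ¬ 3 ∣ n →
    GoodRing (ZMod n) := by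
  induction n using induction_on_primes with
  | zero => intro _ h; simp at h
  | one =>
    intro _ _ _ _ f g h hs x
    refine ⟨1, 1, 1, Subsingleton.elim _ _, ?_⟩
    have : Subsingleton (ZMod 1)ˣ := inferInstance
    have hu : ∀ F : (ZMod 1)ˣ → ℝ, ∑ r, F r = F 1 := fun F => Fintype.sum_subsingleton F 1
    rw [hu, hu, hu, Fintype.card_eq_one_iff.2 ⟨1, fun y => Subsingleton.elim _ _⟩] at hs
    norm_num at hs ⊢
    exact hs
  | prime_mul p a hp ih =>
    intro _ hodd hsf h3
    have hcop : Nat.Coprime p a := Nat.coprime_of_squarefree_mul hsf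
    have := Fact.mk hp
    have ha : a ≠ 0 := by rintro rfl; simp at hodd
    have : NeZero a := ⟨ha⟩
    have h5 : 5 ≤ p := by
      have := hp.two_le
      by_contra! hlt
      have hpo := Nat.Odd.of_mul_left hodd
      interval_cases p
      · exact absurd hpo (by decide)
      · exact h3 (Dvd.intro _ rfl)
      · exact absurd hpo (by decide)
    have hga : GoodRing (ZMod a) := ih (Nat.Odd.of_mul_right hodd) (hsf.of_mul_right)
      (fun h => h3 (h.mul_left p))
    exact GoodRing.transfer (ZMod.chineseRemainder hcop).symm ((goodRing_prime p h5).prod hga)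

/-- Proposition: let `m` be an odd squarefree positive integer divisible by `3` and
`f : (ℤ/mℤ)* → (0,1]`. For `i = 1, 2` let `αᵢ` be the average of `f` over units `r` with
`r ≡ i (mod 3)`. If `2α₁ + α₂ > 3/2` and `2α₂ + α₁ > 3/2`, then every `x ∈ ℤ/mℤ` is
`a₁ + a₂ + a₃` with the `aᵢ` units and `f(a₁) + f(a₂) + f(a₃) > 3/2`. -/
theorem stmt6 (m : ℕ) [NeZero m] (hodd : Odd m) (hsf : Squarefree m) (h3 : 3 ∣ m)
    (f : (ZMod m)ˣ → ℝ) (hf : ∀ x, f x ∈ Set.Ioc (0 : ℝ) 1)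
    (α : ZMod 3 → ℝ)
    (hα : ∀ i : ZMod 3,
      α i = (∑ r ∈ Finset.univ.filter
              (fun r : (ZMod m)ˣ => ZMod.castHom h3 (ZMod 3) (r : ZMod m) = i), f r) /
            ((Finset.univ.filter
              (fun r : (ZMod m)ˣ => ZMod.castHom h3 (ZMod 3) (r : ZMod m) = i)).card : ℝ))
    (h1 : 2 * α 1 + α 2 > 3 / 2) (h2 : 2 * α 2 + α 1 > 3 / 2) :
    ∀ x : ZMod m, ∃ a₁ a₂ a₃ : (ZMod m)ˣ,
      x = (a₁ : ZMod m) + (a₂ : ZMod m) + (a₃ : ZMod m) ∧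
      f a₁ + f a₂ + f a₃ > 3 / 2 := by
  obtain ⟨n, rfl⟩ := id h3
  have hcop : Nat.Coprime 3 n := Nat.coprime_of_squarefree_mul hsf
  have : NeZero n := ⟨by rintro rfl; simp at hodd⟩
  have hn : GoodRing (ZMod n) := goodRing_zmod n (Nat.Odd.of_mul_right hodd) hsf.of_mul_right
    (by intro h; have := Nat.dvd_gcd (dvd_refl 3) h; rw [hcop.gcd_eq_one] at this; omega)
  let e := ZMod.chineseRemainder hcop
  let u : (ZMod (3 * n))ˣ ≃* (ZMod 3)ˣ × (ZMod n)ˣ :=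
    (Units.mapEquiv e.toMulEquiv).trans MulEquiv.prodUnits
  have hu1 : ∀ r, ((u r).1 : ZMod 3) = (e r).1 := fun r => rfl
  have hus : ∀ r, ((u.symm r : (ZMod (3 * n))ˣ) : ZMod (3 * n)) =
      e.symm ((r.1 : ZMod 3), (r.2 : ZMod n)) := fun r => rfl
  have hcast : ∀ y : ZMod (3 * n), ZMod.castHom h3 (ZMod 3) y = (e y).1 := by
    intro y
    have : ZMod.castHom h3 (ZMod 3) = (RingHom.fst (ZMod 3) (ZMod n)).comp e.toRingHom :=
      Subsingleton.elim _ _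
    rw [this]; rfl
  have hpos : (0 : ℝ) < Fintype.card (ZMod n)ˣ := by exact_mod_cast Fintype.card_pos
  have hsum : ∀ (i : (ZMod 3)ˣ) (F : (ZMod (3 * n))ˣ → ℝ), (∑ r ∈ Finset.univ.filter
      (fun r : (ZMod (3 * n))ˣ => ZMod.castHom h3 (ZMod 3) (r : ZMod (3 * n)) = i), F r) =
      ∑ s, F (u.symm (i, s)) := by
    intro i F
    symm
    refine Finset.sum_bij (fun s _ => u.symm (i, s)) ?_ ?_ ?_ ?_
    · intro s _
      simp only [Finset.mem_filter, Finset.mem_univ, true_and]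
      rw [hcast, hus]
      simp
    · intro s _ t _ hst
      simpa using hst
    · intro r hr
      simp only [Finset.mem_filter, Finset.mem_univ, true_and] at hr
      rw [hcast, ← hu1] at hr
      refine ⟨(u r).2, Finset.mem_univ _, ?_⟩
      rw [← Units.ext hr]
      simp
    · intros; rfl
  have hα' : ∀ i : (ZMod 3)ˣ, ∑ s, f (u.symm (i, s)) = α i * Fintype.card (ZMod n)ˣ := by
    intro i
    have hc := hsum i (fun _ => 1)
    simp only [Finset.sum_const, nsmul_eq_mul, mul_one, Finset.card_univ] at hc
    rw [hα i, hsum i f, hc, div_mul_cancel₀ _ hpos.ne']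
  have main : ∀ i j k : (ZMod 3)ˣ, 3 / 2 < α i + α j + α k → ∀ x : ZMod (3 * n),
      (e x).1 = i + j + k → ∃ a₁ a₂ a₃ : (ZMod (3 * n))ˣ,
      x = (a₁ : ZMod (3 * n)) + a₂ + a₃ ∧ f a₁ + f a₂ + f a₃ > 3 / 2 := by
    intro i j k hijk x hx
    obtain ⟨a, b, c, hx', hv⟩ := hn (fun s => f (u.symm (i, s))) (fun s => f (u.symm (j, s)))
      (fun s => f (u.symm (k, s))) (by
        rw [hα', hα', hα', ← add_mul, ← add_mul]
        exact mul_lt_mul_of_pos_right hijk hpos) (e x).2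
    refine ⟨_, _, _, ?_, hv⟩
    apply e.injective
    rw [hus, hus, hus, map_add, map_add]
    ext
    · simpa using hx
    · simpa using hx'
  let w : (ZMod 3)ˣ := ⟨2, 2, by decide, by decide⟩
  have hw : ((w : (ZMod 3)ˣ) : ZMod 3) = 2 := rfl
  have hone : ((1 : (ZMod 3)ˣ) : ZMod 3) = 1 := rfl
  intro x
  have hcases : ∀ y : ZMod 3, y = 0 ∨ y = 1 ∨ y = 2 := by decide
  rcases hcases (e x).1 with hx | hx | hx
  · rcases lt_or_ge (1 / 2) (α 1) with h | h
    · exact main 1 1 1 (by rw [hone]; linarith) x (by rw [hx, hone]; decide)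
    · exact main w w w (by rw [hw]; linarith) x (by rw [hx, hw]; decide)
  · exact main 1 1 w (by rw [hone, hw]; linarith) x (by rw [hx, hone, hw]; decide)
  · exact main w w 1 (by rw [hone, hw]; linarith) x (by rw [hx, hone, hw]; decide)
end

section
/- Let n ≥ 6 be an even positive integer and let a₀ ≥ a₁ ≥ … ≥ a_{n−1} be a decreasing sequence of real numbers in [0,1] with average A = (1/n)∑_{j=0}^{n−1} a_j. Suppose that for all triples (i,j,k) with 0 ≤ i, j, k ≤ n−1 and i + j + k ≥ n one has a_i a_j + a_j a_k + a_k a_i ≤ (5/8)(a_i + a_j + a_k). Then A ≤ 5/8. -/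
theorem auxA (x y : ℝ) (hx : 0 ≤ x) (hx' : x ≤ 3/8)
    (h : x*x + x*y + y*x + 5/8*(x+x+y) ≤ 0) : y ≤ -x := by
  by_contra hc
  push Not at hc
  nlinarith [mul_pos (show (0:ℝ) < y + x by linarith) (show (0:ℝ) < 2*x+5/8 by linarith)]

theorem auxB (u v : ℝ) (hu : 0 ≤ u) (hu' : u ≤ 3/8) (hv : -(5/8) ≤ v)
    (h : u*v + v*v + v*u + 5/8*(u+v+v) ≤ 0) : v ≤ -(u/3) := by
  by_contra hc
  push Not at hc
  nlinarith [mul_pos (show (0:ℝ) < v + u/3 by linarith)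
    (show (0:ℝ) < 2*u + v - u/3 + 5/4 by linarith), mul_nonneg hu (sub_nonneg.2 hu')]

theorem auxC (x y z : ℝ) (hx : 0 ≤ x) (hx' : x ≤ 3/8) (hy : 0 ≤ y) (hy' : y ≤ 3/8)
    (h : x*y + y*z + z*x + 5/8*(x+y+z) ≤ 0) : z ≤ -((x+y)/2) := by
  by_contra hc
  push Not at hc
  nlinarith [mul_pos (show (0:ℝ) < z + (x+y)/2 by linarith)
    (show (0:ℝ) < x+y+5/8 by linarith), mul_nonneg hx (sub_nonneg.2 hx'),
    mul_nonneg hy (sub_nonneg.2 hy')]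

theorem sum_two_mul (f : ℕ → ℝ) (m : ℕ) : ∑ j ∈ Finset.range (2*m), f j
    = ∑ j ∈ Finset.range m, f (2*j) + ∑ j ∈ Finset.range m, f (2*j+1) := by
  induction m with
  | zero => simp
  | succ m ih =>
    rw [show 2*(m+1) = 2*m+1+1 by ring, Finset.sum_range_succ, Finset.sum_range_succ, ih,
      Finset.sum_range_succ, Finset.sum_range_succ]
    ring

theorem aux_main (k : ℕ) (e : ℕ → ℝ) (hlo : ∀ i < 2*(k+3), -(5/8) ≤ e i)
    (hhi : ∀ i < 2*(k+3), e i ≤ 3/8)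
    (hdec : ∀ i j, i ≤ j → j < 2*(k+3) → e j ≤ e i)
    (h : ∀ i j l, i < 2*(k+3) → j < 2*(k+3) → l < 2*(k+3) → 2*(k+3) ≤ i + j + l →
      e i * e j + e j * e l + e l * e i + 5 / 8 * (e i + e j + e l) ≤ 0) :
    ∑ j ∈ Finset.range (2*(k+3)), e j ≤ 0 := by
  rcases le_total (e 0) 0 with h0 | h0
  · apply Finset.sum_nonpos
    intro i hi
    exact (hdec 0 i (Nat.zero_le _) (Finset.mem_range.1 hi)).trans h0
  have hB : e (k+3) ≤ -(e 0/3) := auxB _ _ h0 (hhi 0 (by omega)) (hlo _ (by omega))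
    (h 0 (k+3) (k+3) (by omega) (by omega) (by omega) (by omega))
  have hB' : ∀ i, k+3 ≤ i → i < 2*(k+3) → e i ≤ -(e 0/3) :=
    fun i h1 h2 => (hdec _ _ h1 h2).trans hB
  set p : ℕ → ℝ := fun i => max (e i) 0 with hp
  set g : ℕ → ℝ := fun i => max (-e i) 0 with hg
  have hp0 : ∀ i, 0 ≤ p i := fun i => le_max_right _ _
  have hg0 : ∀ i, 0 ≤ g i := fun i => le_max_right _ _
  have hgl : ∀ i, -e i ≤ g i := fun i => le_max_left _ _
  have hepg : ∀ i, e i = p i - g i := by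
    intro i
    simp only [hp, hg]
    rcases le_total (e i) 0 with h1 | h1
    · rw [max_eq_right h1, max_eq_left (by linarith)]; ring
    · rw [max_eq_left h1, max_eq_right (by linarith)]; ring
  have hA : ∀ i, 1 ≤ i → i < k+3 → p i ≤ g (2*(k+3) - 2*i) := by
    intro i h1 h2
    rcases le_total (e i) 0 with h3 | h3
    · have : p i = 0 := max_eq_right h3
      rw [this]; exact hg0 _
    · have : p i = e i := max_eq_left h3
      rw [this]
      have := auxA _ _ h3 (hhi i (by omega))
        (h i i (2*(k+3)-2*i) (by omega) (by omega) (by omega) (by omega))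
      linarith [hgl (2*(k+3) - 2*i)]
  have hP : ∑ j ∈ Finset.range (2*(k+3)), p j
      = ∑ j ∈ Finset.range (k+1), p (j+2) + p 0 + p 1 := by
    have : ∑ j ∈ Finset.range (2*(k+3)), p j = ∑ j ∈ Finset.range (k+3), p j := by
      symm
      apply Finset.sum_subset
      · intro i; simp only [Finset.mem_range]; omega
      · intro i h1 h2
        simp only [Finset.mem_range] at h1 h2
        exact max_eq_right (by linarith [hB' i (by omega) h1])
    rw [this, Finset.sum_range_succ', Finset.sum_range_succ']
    simp only [zero_add]
    ring
  have hN : ∑ j ∈ Finset.range (k+1), p (j+2) + g (2*k+5) + g (2*k+4) + g (2*k+3)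
      ≤ ∑ j ∈ Finset.range (2*(k+3)), g j := by
    rw [sum_two_mul]
    have h1 : ∑ j ∈ Finset.range (k+1), p (j+2) + g (2*k+4)
        ≤ ∑ j ∈ Finset.range (k+3), g (2*j) := by
      rw [Finset.sum_range_succ (fun j => g (2*j)) (k+2),
        Finset.sum_range_succ' (fun j => g (2*j)) (k+1),
        ← Finset.sum_range_reflect (fun j => p (j+2)) (k+1)]
      have : ∑ j ∈ Finset.range (k+1), p (k+1-1-j+2)
          ≤ ∑ j ∈ Finset.range (k+1), g (2*(j+1)) := by
        apply Finset.sum_le_sum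
        intro j hj
        have hj := Finset.mem_range.1 hj
        have := hA (k+1-1-j+2) (by omega) (by omega)
        rwa [show 2*(k+3) - 2*(k+1-1-j+2) = 2*(j+1) by omega] at this
      have := hg0 (2*0)
      rw [show 2*(k+2) = 2*k+4 by ring]
      linarith
    have h2 : g (2*k+5) + g (2*k+3) ≤ ∑ j ∈ Finset.range (k+3), g (2*j+1) := by
      rw [Finset.sum_range_succ, Finset.sum_range_succ]
      have : 0 ≤ ∑ j ∈ Finset.range (k+1), g (2*j+1) := Finset.sum_nonneg fun i _ => hg0 _
      rw [show 2*(k+2)+1 = 2*k+5 by ring, show 2*(k+1)+1 = 2*k+3 by ring]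
      linarith
    linarith
  have hbase : p 0 + p 1 ≤ g (2*k+5) + g (2*k+4) + g (2*k+3) := by
    have b1 := hB' (2*k+5) (by omega) (by omega)
    have b2 := hB' (2*k+4) (by omega) (by omega)
    have b3 := hB' (2*k+3) (by omega) (by omega)
    have g1 := hgl (2*k+5)
    have g2 := hgl (2*k+4)
    have g3 := hgl (2*k+3)
    have hp0' : p 0 = e 0 := max_eq_left h0
    rcases le_total (e 1) 0 with h3 | h3
    · have : p 1 = 0 := max_eq_right h3
      linarith
    · have : p 1 = e 1 := max_eq_left h3
      have c1 := auxC _ _ _ h0 (hhi 0 (by omega)) h3 (hhi 1 (by omega))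
        (h 0 1 (2*k+5) (by omega) (by omega) (by omega) (by omega))
      have c2 := auxA _ _ h3 (hhi 1 (by omega))
        (h 1 1 (2*k+4) (by omega) (by omega) (by omega) (by omega))
      rcases le_total (e 1) (e 0 / 3) with h4 | h4 <;> linarith
  rw [Finset.sum_congr rfl fun i _ => hepg i, Finset.sum_sub_distrib]
  linarith


/-- Symmetric sequence lemma: let `n ≥ 6` be even and `a₀ ≥ a₁ ≥ ⋯ ≥ a_{n-1}` a decreasing
sequence in `[0,1]` such that `a_i a_j + a_j a_k + a_k a_i ≤ (5/8)(a_i + a_j + a_k)` for all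
triples with `i + j + k ≥ n`. Then the average is at most `5/8`. -/
theorem stmt8 (n : ℕ) (hn : 6 ≤ n) (heven : Even n) (a : ℕ → ℝ)
    (hmem : ∀ i < n, a i ∈ Set.Icc (0 : ℝ) 1)
    (hdec : ∀ i j, i ≤ j → j < n → a j ≤ a i)
    (h : ∀ i j k, i < n → j < n → k < n → n ≤ i + j + k →
      a i * a j + a j * a k + a k * a i ≤ 5 / 8 * (a i + a j + a k)) :
    (∑ j ∈ Finset.range n, a j) / n ≤ 5 / 8 := by

  obtain ⟨m, hm⟩ := heven
  obtain ⟨k, rfl⟩ : ∃ k, m = k + 3 := ⟨m - 3, by omega⟩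
  obtain rfl : n = 2*(k+3) := by omega
  have key := aux_main k (fun i => a i - 5/8)
    (fun i hi => by have := (hmem i hi).1; linarith)
    (fun i hi => by have := (hmem i hi).2; linarith)
    (fun i j h1 h2 => by have := hdec i j h1 h2; linarith)
    (fun i j l h1 h2 h3 h4 => by have := h i j l h1 h2 h3 h4; nlinarith)
  rw [Finset.sum_sub_distrib, Finset.sum_const, Finset.card_range, nsmul_eq_mul] at key
  have hpos : (0:ℝ) < ((2*(k+3) : ℕ) : ℝ) := by positivity
  rw [div_le_iff₀ hpos]
  linarith
end

section
/- Let n ≥ 10 be an even positive integer and let {a_i}, {b_i}, {c_i} (0 ≤ i ≤ n−1) be three decreasing sequences of real numbers in [0,1], with averages A, B, C respectively. Suppose that for all triples (i,j,k) with 0 ≤ i, j, k ≤ n−1 and i + j + k ≥ n one has a_i b_j + b_j c_k + c_k a_i ≤ (5/8)(a_i + b_j + c_k). Then AB + BC + CA ≤ (5/8)(A + B + C). -/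
/-- the quadratic form of the statement -/
noncomputable def ff (x y z : ℝ) : ℝ := x * y + y * z + z * x - 5 / 8 * (x + y + z)

theorem perm_sum (m : ℕ) (hm : 0 < m) (j : ℕ) (w : ℕ → ℝ) :
    ∑ i ∈ Finset.range m, w ((2 * m - i - j % m) % m) = ∑ i ∈ Finset.range m, w i := by
  have hj := Nat.mod_lt j hm
  generalize j % m = t at hj
  have key : ∀ i < m, (2 * m - i - t) % m = if i + t = 0 then 0 else
      if i + t ≤ m then (m - i - t) % m else 2 * m - i - t := by
    intro i hi
    split_ifs with h0 h1
    · have : 2 * m - i - t = 2 * m := by omega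
      rw [this]; simp
    · have : 2 * m - i - t = (m - i - t) + m := by omega
      rw [this]; simp
    · exact Nat.mod_eq_of_lt (by omega)
  have inv : ∀ i < m, (2 * m - ((2 * m - i - t) % m) - t) % m = i := by
    intro i hi
    have hlt := Nat.mod_lt (2 * m - i - t) hm
    have hd := Nat.div_add_mod (2 * m - i - t) m
    generalize (2 * m - i - t) % m = r at *
    generalize (2 * m - i - t) / m = d at *
    have hle : d ≤ 2 := by
      by_contra hc
      have : m * 3 ≤ m * d := Nat.mul_le_mul_left m (by omega)
      omega
    have : 2 * m - r - t = i + m * d := by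
      interval_cases d <;> omega
    rw [this, Nat.add_mul_mod_self_left, Nat.mod_eq_of_lt hi]
  refine Finset.sum_nbij' (fun i => (2 * m - i - t) % m) (fun i => (2 * m - i - t) % m)
    ?_ ?_ ?_ ?_ ?_
  · intro i _; simpa using Nat.mod_lt _ hm
  · intro i _; simpa using Nat.mod_lt _ hm
  · intro i hi; exact inv i (by simpa using hi)
  · intro i hi; exact inv i (by simpa using hi)
  · intro i _; rfl

theorem mod_avg (m : ℕ) (hm : 0 < m) (u v w : ℕ → ℝ)
    (h : ∀ i j k, i < m → j < m → k < m → m ≤ i + j + k → ff (u i) (v j) (w k) ≤ 0) :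
    (∑ i ∈ Finset.range m, u i) * (∑ i ∈ Finset.range m, v i)
    + (∑ i ∈ Finset.range m, v i) * (∑ i ∈ Finset.range m, w i)
    + (∑ i ∈ Finset.range m, w i) * (∑ i ∈ Finset.range m, u i)
    - 5 / 8 * m * ((∑ i ∈ Finset.range m, u i) + (∑ i ∈ Finset.range m, v i)
      + (∑ i ∈ Finset.range m, w i)) ≤ ff (u 0) (v 0) (w 0) := by
  set K : ℕ → ℕ → ℕ := fun i j => (2 * m - i - j) % m with hK
  have hw1 : ∀ j < m, ∑ i ∈ Finset.range m, w (K i j) = ∑ i ∈ Finset.range m, w i := by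
    intro j hj
    have := perm_sum m hm j w
    rwa [Nat.mod_eq_of_lt hj] at this
  have hsym : ∀ i j, K i j = K j i := by
    intro i j; simp only [hK]; congr 1; omega
  have hw2 : ∀ i < m, ∑ j ∈ Finset.range m, w (K i j) = ∑ i ∈ Finset.range m, w i := by
    intro i hi
    rw [← hw1 i hi]
    exact Finset.sum_congr rfl (fun j _ => by rw [hsym])
  have e1 : ∑ i ∈ Finset.range m, ∑ j ∈ Finset.range m, u i * v j
      = (∑ i ∈ Finset.range m, u i) * (∑ i ∈ Finset.range m, v i) := by
    rw [Finset.sum_mul_sum]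
  have e2 : ∑ i ∈ Finset.range m, ∑ j ∈ Finset.range m, v j * w (K i j)
      = (∑ i ∈ Finset.range m, v i) * (∑ i ∈ Finset.range m, w i) := by
    rw [Finset.sum_comm, Finset.sum_mul]
    refine Finset.sum_congr rfl (fun j hj => ?_)
    rw [← Finset.mul_sum, hw1 j (by simpa using hj)]
  have e3 : ∑ i ∈ Finset.range m, ∑ j ∈ Finset.range m, w (K i j) * u i
      = (∑ i ∈ Finset.range m, w i) * (∑ i ∈ Finset.range m, u i) := by
    rw [Finset.mul_sum]
    refine Finset.sum_congr rfl (fun j hj => ?_)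
    rw [← Finset.sum_mul, hw2 j (by simpa using hj)]
  have e4 : ∑ i ∈ Finset.range m, ∑ j ∈ Finset.range m, (u i + v j + w (K i j))
      = m * ((∑ i ∈ Finset.range m, u i) + (∑ i ∈ Finset.range m, v i)
      + (∑ i ∈ Finset.range m, w i)) := by
    have : ∀ i ∈ Finset.range m, ∑ j ∈ Finset.range m, (u i + v j + w (K i j))
       = m * u i + ∑ i ∈ Finset.range m, v i + ∑ i ∈ Finset.range m, w i := by
      intro i hi
      rw [Finset.sum_add_distrib, Finset.sum_add_distrib, hw2 i (by simpa using hi)]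
      simp
    rw [Finset.sum_congr rfl this, Finset.sum_add_distrib, Finset.sum_add_distrib,
      ← Finset.mul_sum]
    simp; ring
  have tot : ∑ i ∈ Finset.range m, ∑ j ∈ Finset.range m, ff (u i) (v j) (w (K i j)) =
    (∑ i ∈ Finset.range m, u i) * (∑ i ∈ Finset.range m, v i)
    + (∑ i ∈ Finset.range m, v i) * (∑ i ∈ Finset.range m, w i)
    + (∑ i ∈ Finset.range m, w i) * (∑ i ∈ Finset.range m, u i)
    - 5 / 8 * m * ((∑ i ∈ Finset.range m, u i) + (∑ i ∈ Finset.range m, v i)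
      + (∑ i ∈ Finset.range m, w i)) := by
    rw [← e1, ← e2, ← e3, mul_assoc, ← e4]
    rw [Finset.mul_sum]
    simp only [Finset.mul_sum (Finset.range m) _ (5 / 8 : ℝ)]
    simp only [ff, Finset.sum_add_distrib, Finset.sum_sub_distrib]
  rw [← tot]
  have hle : ∀ i ∈ Finset.range m, ∀ j ∈ Finset.range m, ff (u i) (v j) (w (K i j))
      ≤ if i = 0 then (if j = 0 then ff (u 0) (v 0) (w 0) else 0) else 0 := by
    intro i hi j hj
    have hi' : i < m := by simpa using hi
    have hj' : j < m := by simpa using hj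
    have hk : K i j < m := Nat.mod_lt _ hm
    have main : ¬ (i = 0 ∧ j = 0) → m ≤ i + j + K i j := by
      intro hne
      have hd := Nat.div_add_mod (2 * m - i - j) m
      change m * ((2 * m - i - j) / m) + K i j = _ at hd
      generalize (2 * m - i - j) / m = d at *
      have : d < 2 := by
        by_contra hc
        have : m * 2 ≤ m * d := Nat.mul_le_mul_left m (by omega)
        omega
      interval_cases d <;> omega
    split_ifs with h1 h2
    · subst h1; subst h2
      have : K 0 0 = 0 := by simp [hK]
      rw [this]
    · exact h i j _ hi' hj' hk (main (by tauto))
    · exact h i j _ hi' hj' hk (main (by tauto))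
  refine (Finset.sum_le_sum (fun i hi => Finset.sum_le_sum (hle i hi))).trans ?_
  apply le_of_eq
  rw [Finset.sum_eq_single_of_mem 0 (by simpa using hm) (by intro b _ hb; simp [hb])]
  simp [hm.ne']

/-- monotonicity: nonpositivity passes to smaller points -/
theorem ff_mono1 (x y z x' : ℝ) (hx : 0 ≤ x) (hxx : x ≤ x') (hy : 0 ≤ y) (hz : 0 ≤ z)
    (hy1 : y ≤ 1) (hz1 : z ≤ 1) (h : ff x' y z ≤ 0) : ff x y z ≤ 0 := by
  unfold ff at *
  rcases le_total (y + z) (5 / 8) with h1 | h1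
  · nlinarith [mul_nonneg hx (sub_nonneg.2 h1), mul_nonneg hy hz,
      mul_nonneg hy (sub_nonneg.2 hz1), mul_nonneg hz (sub_nonneg.2 hy1)]
  · nlinarith [mul_nonneg (sub_nonneg.2 hxx) (sub_nonneg.2 h1)]

theorem ff_mono (x y z x' y' z' : ℝ) (hx : 0 ≤ x) (hy : 0 ≤ y) (hz : 0 ≤ z)
    (hxx : x ≤ x') (hyy : y ≤ y') (hzz : z ≤ z') (hx1 : x' ≤ 1) (hy1 : y' ≤ 1) (hz1 : z' ≤ 1)
    (h : ff x' y' z' ≤ 0) : ff x y z ≤ 0 := by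
  have r : ∀ x y z, ff x y z = ff y z x := by intros; unfold ff; ring
  have h1 := ff_mono1 x y' z' x' hx hxx (by linarith) (by linarith) (by linarith) (by linarith) h
  rw [r] at h1
  have h2 := ff_mono1 y z' x y' hy hyy (by linarith) (by linarith) (by linarith) (by linarith) h1
  rw [r] at h2
  have h3 := ff_mono1 z x y z' hz hzz (by linarith) (by linarith) (by linarith) (by linarith) h2
  rwa [r] at h3

theorem ff_le (x y z : ℝ) (hx : 0 ≤ x) (hy : 0 ≤ y) (hz : 0 ≤ z)
    (hx1 : x ≤ 1) (hy1 : y ≤ 1) (hz1 : z ≤ 1) : ff x y z ≤ 9 / 8 := by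
  unfold ff
  nlinarith [mul_nonneg hx (sub_nonneg.2 hy1), mul_nonneg hy (sub_nonneg.2 hz1),
    mul_nonneg hz (sub_nonneg.2 hx1)]

/-- small pair sum: the tail value is very negative, or we are done -/
theorem case2 (α β γ : ℝ) (ha : 0 ≤ α) (hb : 0 ≤ β) (hc : 0 ≤ γ) (ha1 : α ≤ 1)
    (hs : β + γ ≤ 77 / 100) (hF : -(135 / 1000) < ff α β γ) :
    ff ((1 + α) / 2) ((1 + β) / 2) ((1 + γ) / 2) ≤ 0 := by
  obtain ⟨s, hsd⟩ : ∃ s, s = β + γ := ⟨_, rfl⟩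
  have hs0 : 0 ≤ s := by linarith
  have hq : β * γ ≤ s ^ 2 / 4 := by rw [hsd]; nlinarith [sq_nonneg (β - γ)]
  have hF' : -(135 / 1000) < α * (s - 5 / 8) + s ^ 2 / 4 - 5 / 8 * s := by
    unfold ff at hF; rw [hsd] at *; nlinarith
  have hs2 : s ≤ 1 / 4 := by
    by_contra hc
    push Not at hc
    rcases le_total s (5 / 8) with h1 | h1
    · nlinarith [mul_nonneg ha (sub_nonneg.2 h1)]
    · nlinarith [mul_nonneg (sub_nonneg.2 ha1) (sub_nonneg.2 h1)]
  have hα : α ≤ 1 / 4 := by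
    by_contra hc
    push Not at hc
    nlinarith
  unfold ff
  have : (1 + α) / 2 * (s / 2 + 3 / 8) ≤ 5 / 8 * (s / 2 + 3 / 8) := by
    apply mul_le_mul_of_nonneg_right <;> linarith
  rw [hsd] at *
  nlinarith

/-- large pair sums -/
theorem case1 (p q x y z α β γ : ℝ) (hxp : x ≤ p) (hyq : y ≤ q) (hq1 : q ≤ 1) (hy0 : 0 ≤ y)
    (hax : α ≤ x) (hby : β ≤ y) (hcz : γ ≤ z)
    (h1 : 77 / 100 ≤ β + γ) (h2 : 77 / 100 ≤ α + γ) (h3 : 77 / 100 ≤ α + β)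
    (g0 : ff x y z ≤ 0) (g1 : ff p y z ≤ 0) (g2 : ff x q z ≤ 0) :
    ff α β γ ≤ 0 ∧ ff p q z ≤ - (25 / 3) * ff α β γ := by
  have hmono : ff α β γ ≤ ff x y z := by
    have e : ff x y z - ff α β γ = (x - α) * (y + z - 5 / 8) + (y - β) * (z + α - 5 / 8)
      + (z - γ) * (α + β - 5 / 8) := by unfold ff; ring
    have := mul_nonneg (sub_nonneg.2 hax) (by linarith : 0 ≤ y + z - 5 / 8)
    have := mul_nonneg (sub_nonneg.2 hby) (by linarith : 0 ≤ z + α - 5 / 8)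
    have := mul_nonneg (sub_nonneg.2 hcz) (by linarith : 0 ≤ α + β - 5 / 8)
    linarith
  have e1 : ff p y z = ff x y z + (p - x) * (y + z - 5 / 8) := by unfold ff; ring
  have e2 : ff x q z = ff x y z + (q - y) * (x + z - 5 / 8) := by unfold ff; ring
  have e3 : ff p q z = ff p y z + ff x q z - ff x y z + (p - x) * (q - y) := by unfold ff; ring
  have d1 : (p - x) * (145 / 1000) ≤ (p - x) * (y + z - 5 / 8) :=
    mul_le_mul_of_nonneg_left (by linarith) (by linarith)
  have d2 : (p - x) * (q - y) ≤ (p - x) * 1 :=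
    mul_le_mul_of_nonneg_left (by linarith) (by linarith)
  refine ⟨by linarith, by linarith⟩

theorem core (M : ℝ) (hM : 25 ≤ M) (p q r x y z α β γ : ℝ)
    (ha : 0 ≤ α) (hb : 0 ≤ β) (hc : 0 ≤ γ)
    (hax : α ≤ x) (hby : β ≤ y) (hcz : γ ≤ z)
    (hxp : x ≤ p) (hyq : y ≤ q) (hzr : z ≤ r) (hp1 : p ≤ 1) (hq1 : q ≤ 1) (hr1 : r ≤ 1)
    (g0 : ff x y z ≤ 0) (g1 : ff p y z ≤ 0) (g2 : ff x q z ≤ 0) (g3 : ff x y r ≤ 0) :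
    ff ((1 + α) / 2) ((1 + β) / 2) ((1 + γ) / 2) ≤ 0 ∨
    ff p q z + ff p y r + ff x q r + M * ff α β γ ≤ 0 := by
  have rot : ∀ x y z, ff x y z = ff y z x := by intros; unfold ff; ring
  by_cases hall : 77 / 100 ≤ β + γ ∧ 77 / 100 ≤ α + γ ∧ 77 / 100 ≤ α + β
  · obtain ⟨h1, h2, h3⟩ := hall
    right
    have k1 := case1 p q x y z α β γ hxp hyq hq1 (by linarith) hax hby hcz h1 h2 h3 g0 g1 g2
    have k2 := case1 q r y z x β γ α hyq hzr hr1 (by linarith) hby hcz hax (by linarith)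
      (by linarith) h1 (by rw [← rot]; exact g0) (by rw [← rot]; exact g2)
      (by rw [← rot]; exact g3)
    have k3 := case1 r p z x y γ α β hzr hxp hp1 (by linarith) hcz hax hby h3
      (by linarith) (by linarith) (by rw [rot]; exact g0) (by rw [rot]; exact g3)
      (by rw [rot]; exact g1)
    rw [← rot α β γ, ← rot x q r] at k2
    rw [rot γ α β, rot r p y] at k3
    nlinarith [k1.1, k1.2, k2.2, k3.2]
  · by_cases hF : -(135 / 1000) < ff α β γ
    · left
      by_cases h1 : 77 / 100 ≤ β + γ
      · by_cases h2 : 77 / 100 ≤ α + γ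
        · have h3 : α + β ≤ 77 / 100 := by
            by_contra hcon
            push Not at hcon
            exact hall ⟨h1, h2, hcon.le⟩
          have := case2 γ α β hc ha hb (by linarith) h3 (by rw [rot]; exact hF)
          rwa [rot] at this
        · have := case2 β γ α hb hc ha (by linarith) (by linarith) (by rw [← rot]; exact hF)
          rwa [← rot] at this
      · exact case2 α β γ ha hb hc (by linarith) (by linarith) hF
    · right
      have b1 := ff_le p q z (by linarith) (by linarith) (by linarith) hp1 hq1 (by linarith)
      have b2 := ff_le p y r (by linarith) (by linarith) (by linarith) hp1 (by linarith) hr1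
      have b3 := ff_le x q r (by linarith) (by linarith) (by linarith) (by linarith) hq1 hr1
      nlinarith

theorem avg_bounds_s10 (m : ℕ) (hm : 0 < m) (a : ℕ → ℝ)
    (hmem : ∀ i < m + m, a i ∈ Set.Icc (0 : ℝ) 1)
    (hdec : ∀ i j, i ≤ j → j < m + m → a j ≤ a i) :
    0 ≤ (∑ i ∈ Finset.range m, a i) / m ∧ (∑ i ∈ Finset.range m, a i) / m ≤ 1 ∧
    0 ≤ (∑ i ∈ Finset.range m, a (m + i)) / m ∧
    (∑ i ∈ Finset.range m, a (m + i)) / m ≤ a m := by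
  have hm' : (0 : ℝ) < m := by exact_mod_cast hm
  refine ⟨?_, ?_, ?_, ?_⟩
  · refine div_nonneg (Finset.sum_nonneg fun i hi => (hmem i ?_).1) hm'.le
    have := Finset.mem_range.1 hi; omega
  · rw [div_le_one hm']
    have := Finset.sum_le_card_nsmul (Finset.range m) a 1 (fun i hi => (hmem i (by
      have := Finset.mem_range.1 hi; omega)).2)
    simpa using this
  · refine div_nonneg (Finset.sum_nonneg fun i hi => (hmem _ ?_).1) hm'.le
    have := Finset.mem_range.1 hi; omega
  · rw [div_le_iff₀ hm']
    have := Finset.sum_le_card_nsmul (Finset.range m) (fun i => a (m + i)) (a m)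
      (fun i hi => hdec m (m + i) (by omega) (by
      have := Finset.mem_range.1 hi; omega))
    simpa [mul_comm] using this

/-- Asymmetric sequence lemma: let `n ≥ 10` be even and `{a_i}, {b_i}, {c_i}` three
decreasing sequences in `[0,1]` with averages `A, B, C`. If
`a_i b_j + b_j c_k + c_k a_i ≤ (5/8)(a_i + b_j + c_k)` for all triples with `i + j + k ≥ n`,
then `AB + BC + CA ≤ (5/8)(A + B + C)`. -/
theorem stmt10 (n : ℕ) (hn : 10 ≤ n) (heven : Even n) (a b c : ℕ → ℝ)
    (hamem : ∀ i < n, a i ∈ Set.Icc (0 : ℝ) 1)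
    (hbmem : ∀ i < n, b i ∈ Set.Icc (0 : ℝ) 1)
    (hcmem : ∀ i < n, c i ∈ Set.Icc (0 : ℝ) 1)
    (hadec : ∀ i j, i ≤ j → j < n → a j ≤ a i)
    (hbdec : ∀ i j, i ≤ j → j < n → b j ≤ b i)
    (hcdec : ∀ i j, i ≤ j → j < n → c j ≤ c i)
    (h : ∀ i j k, i < n → j < n → k < n → n ≤ i + j + k →
      a i * b j + b j * c k + c k * a i ≤ 5 / 8 * (a i + b j + c k))
    (A B C : ℝ)
    (hA : A = (∑ i ∈ Finset.range n, a i) / n)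
    (hB : B = (∑ i ∈ Finset.range n, b i) / n)
    (hC : C = (∑ i ∈ Finset.range n, c i) / n) :
    A * B + B * C + C * A ≤ 5 / 8 * (A + B + C) := by
  obtain ⟨m, rfl⟩ := heven
  have hm5 : 5 ≤ m := by omega
  have hm : 0 < m := by omega
  have hmR : (5 : ℝ) ≤ m := by exact_mod_cast hm5
  have hm0 : (m : ℝ) ≠ 0 := by positivity
  have H : ∀ i j k, i < m + m → j < m + m → k < m + m → m + m ≤ i + j + k →
      ff (a i) (b j) (c k) ≤ 0 := by
    intro i j k hi hj hk hs
    have := h i j k hi hj hk hs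
    unfold ff; linarith
  have t1 := mod_avg m hm a b (fun k => c (m + k))
    (fun i j k hi hj hk hs => H _ _ _ (by omega) (by omega) (by omega) (by omega))
  have t2 := mod_avg m hm a (fun k => b (m + k)) c
    (fun i j k hi hj hk hs => H _ _ _ (by omega) (by omega) (by omega) (by omega))
  have t3 := mod_avg m hm (fun k => a (m + k)) b c
    (fun i j k hi hj hk hs => H _ _ _ (by omega) (by omega) (by omega) (by omega))
  obtain ⟨a1, a2, a3, a4⟩ := avg_bounds_s10 m hm a hamem hadec
  obtain ⟨b1, b2, b3, b4⟩ := avg_bounds_s10 m hm b hbmem hbdec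
  obtain ⟨c1, c2, c3, c4⟩ := avg_bounds_s10 m hm c hcmem hcdec
  rw [Finset.sum_range_add] at hA hB hC
  simp only [add_zero] at t1 t2 t3
  have cv : ∀ S : ℝ, ∃ T : ℝ, S = m * T := fun S => ⟨S / m, by field_simp⟩
  obtain ⟨A1, hA1⟩ := cv (∑ i ∈ Finset.range m, a i)
  obtain ⟨A2, hA2⟩ := cv (∑ i ∈ Finset.range m, a (m + i))
  obtain ⟨B1, hB1⟩ := cv (∑ i ∈ Finset.range m, b i)
  obtain ⟨B2, hB2⟩ := cv (∑ i ∈ Finset.range m, b (m + i))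
  obtain ⟨C1, hC1⟩ := cv (∑ i ∈ Finset.range m, c i)
  obtain ⟨C2, hC2⟩ := cv (∑ i ∈ Finset.range m, c (m + i))
  simp only [hA1, hA2, hB1, hB2, hC1, hC2, mul_div_cancel_left₀ _ hm0] at *
  have hh : ∀ S T : ℝ, (m * S + m * T) / ((m + m : ℕ) : ℝ) = (S + T) / 2 := by
    intro S T; push_cast; field_simp; ring
  rw [hh] at hA hB hC
  have goal' : ff A B C ≤ 0 := by
    rcases core ((m : ℝ) ^ 2) (by nlinarith) (a 0) (b 0) (c 0) (a m) (b m) (c m) A2 B2 C2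
      a3 b3 c3 a4 b4 c4 (hadec 0 m (by omega) (by omega)) (hbdec 0 m (by omega) (by omega))
      (hcdec 0 m (by omega) (by omega)) (hamem 0 (by omega)).2 (hbmem 0 (by omega)).2
      (hcmem 0 (by omega)).2
      (H _ _ _ (by omega) (by omega) (by omega) (by omega))
      (H _ _ _ (by omega) (by omega) (by omega) (by omega))
      (H _ _ _ (by omega) (by omega) (by omega) (by omega))
      (H _ _ _ (by omega) (by omega) (by omega) (by omega)) with h1 | h1
    · have am := (hamem m (by omega)).2
      have bm := (hbmem m (by omega)).2
      have cm := (hcmem m (by omega)).2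
      exact ff_mono A B C _ _ _ (by linarith) (by linarith) (by linarith) (by linarith)
        (by linarith) (by linarith) (by linarith) (by linarith) (by linarith) h1
    · have e : 4 * (m : ℝ) ^ 2 * ff A B C =
        (m * A1 * (m * B1) + m * B1 * (m * C2) + m * C2 * (m * A1)
          - 5 / 8 * m * (m * A1 + m * B1 + m * C2))
        + (m * A1 * (m * B2) + m * B2 * (m * C1) + m * C1 * (m * A1)
          - 5 / 8 * m * (m * A1 + m * B2 + m * C1))
        + (m * A2 * (m * B1) + m * B1 * (m * C1) + m * C1 * (m * A2)
          - 5 / 8 * m * (m * A2 + m * B1 + m * C1))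
        + (m : ℝ) ^ 2 * ff A2 B2 C2 := by
        rw [hA, hB, hC]; unfold ff; ring
      have : 4 * (m : ℝ) ^ 2 * ff A B C ≤ 0 := by linarith
      by_contra hcon
      push Not at hcon
      have : 0 < 4 * (m : ℝ) ^ 2 * ff A B C := by positivity
      linarith
  unfold ff at goal'
  linarith
end

section
/- Let A, B, C be arbitrary subsets of (Z/15Z)* such that |A||B| + |B||C| + |C||A| > 5(|A| + |B| + |C|). Then A + B + C = Z/15Z, i.e., every element of Z/15Z can be written as a + b + c with a ∈ A, b ∈ B, c ∈ C. -/
def okk (a b c : ℕ) : Bool := Nat.ble (a*b+b*c+c*a) (5*(a+b+c))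

def UU : List (ZMod 15) := [1,2,4,7,8,11,13,14]

def chk (x : ZMod 15) (B : List (ZMod 15)) (b : ℕ) :
    List (ZMod 15) → List (ZMod 15) → ℕ → Bool
  | [], R, n => okk n b R.length
  | u :: us, R, n =>
    okk (n + (us.length + 1)) b R.length ||
      (chk x B b us R n && chk x B b us (R.filter (fun c => !(B.elem (x - u - c)))) (n+1))

theorem okk_mono {a b c a' c' : ℕ} (hb : 6 ≤ b) (ha : a' ≤ a) (hc : c' ≤ c)
    (h : okk a b c = true) : a'*b+b*c'+c'*a' ≤ 5*(a'+b+c') := by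
  have h : a*b+b*c+c*a ≤ 5*(a+b+c) := Nat.le_of_ble_eq_true h
  obtain ⟨d, rfl⟩ := Nat.exists_eq_add_of_le ha
  obtain ⟨e, rfl⟩ := Nat.exists_eq_add_of_le hc
  obtain ⟨f, rfl⟩ := Nat.exists_eq_add_of_le hb
  have h1 : 0 ≤ d * f := Nat.zero_le _
  have h2 : 0 ≤ e * f := Nat.zero_le _
  have h3 : 0 ≤ d * c' := Nat.zero_le _
  have h4 : 0 ≤ e * a' := Nat.zero_le _
  have h5 : 0 ≤ e * d := Nat.zero_le _
  nlinarith

theorem chk_sound (x : ZMod 15) (B : List (ZMod 15)) (b : ℕ) (hb : 6 ≤ b)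
    (A C : Finset (ZMod 15)) (hav : ∀ a ∈ A, ∀ c ∈ C, x - a - c ∉ B)
    (us : List (ZMod 15)) : ∀ (R : List (ZMod 15)) (n : ℕ), (∀ c ∈ C, c ∈ R) →
    chk x B b us R n = true →
    (n + (us.filter (· ∈ A)).length) * b + b * C.card + C.card * (n + (us.filter (· ∈ A)).length)
      ≤ 5 * ((n + (us.filter (· ∈ A)).length) + b + C.card) := by
  have hcard : ∀ R : List (ZMod 15), (∀ c ∈ C, c ∈ R) → C.card ≤ R.length := by
    intro R hR
    exact (Finset.card_le_card (fun c hc => List.mem_toFinset.2 (hR c hc))).trans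
      (List.toFinset_card_le R)
  induction us with
  | nil =>
    intro R n hR h
    exact okk_mono hb (by simp) (hcard R hR) h
  | cons u us ih =>
    intro R n hR h
    simp only [chk, Bool.or_eq_true, Bool.and_eq_true] at h
    rcases h with h | ⟨h1, h2⟩
    · refine okk_mono hb ?_ (hcard R hR) h
      have := List.length_filter_le (fun a => decide (a ∈ A)) (u :: us)
      simp only [List.length_cons] at this
      omega
    · by_cases hu : u ∈ A
      · have := ih _ (n+1) (fun c hc => by
          simp only [List.mem_filter]
          exact ⟨hR c hc, by simpa using hav u hu c hc⟩) h2
        rw [List.filter_cons_of_pos (by simpa using hu), List.length_cons]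
        rw [show ∀ k, n + (k + 1) = n + 1 + k from fun k => by omega]
        exact this
      · rw [List.filter_cons_of_neg (by simpa using hu)]
        exact ih R n hR h1

def allChk : Bool :=
  UU.sublists.all fun B => Nat.ble B.length 5 ||
    (List.finRange 15).all fun x => chk x B B.length UU UU 0

set_option maxRecDepth 100000 in
theorem allChk_true : allChk = true := by decide +kernel

theorem mem_UU : ∀ a : ZMod 15, IsUnit a → a ∈ UU := by
  have : ∀ a b : ZMod 15, a * b = 1 → a ∈ UU := by decide +kernel
  intro a ha
  obtain ⟨b, hb⟩ := ha.exists_right_inv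
  exact this a b hb

theorem card_UU (A : Finset (ZMod 15)) (hA : ∀ a ∈ A, IsUnit a) :
    (UU.filter (· ∈ A)).length = A.card := by
  have hn : UU.Nodup := by decide +kernel
  rw [← List.toFinset_card_of_nodup (hn.filter _)]
  congr 1
  ext a
  simp only [List.mem_toFinset, List.mem_filter, decide_eq_true_eq]
  exact ⟨fun h => h.2, fun h => ⟨mem_UU a (hA a h), h⟩⟩

theorem key (A B C : Finset (ZMod 15))
    (hA : ∀ a ∈ A, IsUnit a) (hB : ∀ b ∈ B, IsUnit b) (hC : ∀ c ∈ C, IsUnit c)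
    (h : A.card * B.card + B.card * C.card + C.card * A.card >
      5 * (A.card + B.card + C.card)) (hb : 6 ≤ B.card) (x : ZMod 15) :
    ∃ a ∈ A, ∃ b ∈ B, ∃ c ∈ C, x = a + b + c := by
  by_contra hx
  push Not at hx
  have hall := allChk_true
  unfold allChk at hall
  have h1 := List.all_eq_true.1 hall (UU.filter (· ∈ B))
    (List.mem_sublists.2 List.filter_sublist)
  rw [card_UU B hB, Bool.or_eq_true] at h1
  rcases h1 with h1 | h1
  · have := Nat.le_of_ble_eq_true h1
    omega
  · have h2 := List.all_eq_true.1 h1 x (List.mem_finRange x)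
    have := chk_sound x _ _ hb A C (by
      intro a ha c hc hm
      simp only [List.mem_filter, decide_eq_true_eq] at hm
      exact hx a ha _ hm.2 c hc (by ring)) UU UU 0 (fun c hc => mem_UU c (hC c hc)) h2
    rw [card_UU A hA, Nat.zero_add] at this
    omega

/-- Lemma (checked by computer in the paper): if `A, B, C ⊆ (ℤ/15ℤ)*` satisfy
`|A||B| + |B||C| + |C||A| > 5(|A| + |B| + |C|)`, then `A + B + C = ℤ/15ℤ`. -/
theorem stmt11 (A B C : Finset (ZMod 15))
    (hA : ∀ a ∈ A, IsUnit a) (hB : ∀ b ∈ B, IsUnit b) (hC : ∀ c ∈ C, IsUnit c)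
    (h : A.card * B.card + B.card * C.card + C.card * A.card >
      5 * (A.card + B.card + C.card)) :
    ∀ x : ZMod 15, ∃ a ∈ A, ∃ b ∈ B, ∃ c ∈ C, x = a + b + c := by
  intro x
  have hor : 6 ≤ A.card ∨ 6 ≤ B.card ∨ 6 ≤ C.card := by
    by_contra hh
    push Not at hh
    obtain ⟨h1, h2, h3⟩ := hh
    have h1 : A.card ≤ 5 := by omega
    have h2 : B.card ≤ 5 := by omega
    have h3 : C.card ≤ 5 := by omega
    have e1 := Nat.mul_le_mul_left A.card h2
    have e2 := Nat.mul_le_mul_left B.card h3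
    have e3 := Nat.mul_le_mul_left C.card h1
    omega
  rcases hor with h6 | h6 | h6
  · obtain ⟨b, hb, a, ha, c, hc, e⟩ := key B A C hB hA hC (by linarith) h6 x
    exact ⟨a, ha, b, hb, c, hc, by rw [e]; ring⟩
  · exact key A B C hA hB hC h h6 x
  · obtain ⟨a, ha, c, hc, b, hb, e⟩ := key A C B hA hC hB (by linarith) h6 x
    exact ⟨a, ha, b, hb, c, hc, by rw [e]; ring⟩
end
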